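/- arXiv:2103.09989 — 8 statements merged into one kernel-verified Lean document; each statement's English description precedes it below -/
import Mathlib

section
/- Let n > 1 and let S be an n×n real matrix. Then S is a cone automorphism of the Lorentz cone L^n_+ (i.e., S(L^n_+) = L^n_+) if and only if there exist a real number ν > 0, a real number α ≥ 0, and orthogonal (n-1)×(n-1) real matrices U and V such that S = ν · diag(1, V) · T_α · diag(1, Vᵀ) · diag(1, U), where T_α is the n×n matrix whose upper-left 2×2 block is [[√(1+α²), α], [α, √(1+α²)]], whose lower-right (n-2)×(n-2) block is the identity, and whose remaining entries are zero, and diag(1, M) denotes the n×n block-diagonal matrix with 1 in the (1,1) entry and the (n-1)×(n-1) matrix M as the lower-right block. -/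
/-! The cone automorphisms are the invertible matrices `S` such that both `S` and `S⁻¹` map the
cone into itself; in particular `T_α` (with inverse `T_{-α}`), `diag(1, U)` for orthogonal `U`, and
positive multiples are automorphisms, which gives one direction.

Conversely, let `S` be an automorphism and `e = (1, 0)`. The vector `S e` lies in the interior of
the cone, because `e` absorbs every vector of the cone, hence so does `S e`. After rotating its
spatial part onto the first axis, `S e = B e` for some `B = ν diag(1,V) T_α diag(1,Vᵀ)`
(`exists_orthogonal_column`). Then `R = B⁻¹ S` is an automorphism fixing `e`. If `z = R (0, u)`,
applying `R` to `(‖u‖, ±u)` gives `‖z̄‖ + |z₀| ≤ ‖u‖`, and the same bound for `R⁻¹` gives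
`‖u‖ ≤ ‖z̄‖`; so `z₀ = 0` and `‖z̄‖ = ‖u‖`, which means `R = diag(1, U)` with `U` orthogonal. -/

open Matrix

/-- The Lorentz (second-order) cone in ℝⁿ with n = m + 1, coordinates indexed by
`Unit ⊕ Fin m` (the `Unit` coordinate is x₀ and the `Fin m` part is x̄). -/
def lorentzCone (m : ℕ) : Set ((Unit ⊕ Fin m) → ℝ) :=
  {x | Real.sqrt (∑ i, (x (Sum.inr i)) ^ 2) ≤ x (Sum.inl ())}

/-- `diag(1, M)` : block-diagonal n×n matrix with 1 in the (1,1) entry and M below. -/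
def diagOne {m : ℕ} (M : Matrix (Fin m) (Fin m) ℝ) :
    Matrix (Unit ⊕ Fin m) (Unit ⊕ Fin m) ℝ :=
  Matrix.fromBlocks 1 0 0 M

/-- The matrix `T_α` : upper-left 2×2 block `[[√(1+α²), α], [α, √(1+α²)]]`,
lower-right (n-2)×(n-2) identity, other entries zero.  Here n = k + 2. -/
noncomputable def Talpha (k : ℕ) (α : ℝ) :
    Matrix (Unit ⊕ Fin (k + 1)) (Unit ⊕ Fin (k + 1)) ℝ :=
  Matrix.fromBlocks
    (Matrix.of fun _ _ => Real.sqrt (1 + α ^ 2))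
    (Matrix.of fun _ j => if j = 0 then α else 0)
    (Matrix.of fun i _ => if i = 0 then α else 0)
    (Matrix.of fun i j =>
      if i = 0 ∧ j = 0 then Real.sqrt (1 + α ^ 2) else if i = j then 1 else 0)

/-! ### Matrices preserving the cone -/

/-- `S` maps the Lorentz cone into itself. -/
def PreservesCone {m : ℕ} (S : Matrix (Unit ⊕ Fin m) (Unit ⊕ Fin m) ℝ) : Prop :=
  ∀ x ∈ lorentzCone m, S *ᵥ x ∈ lorentzCone m

lemma mem_lorentzCone_iff {m : ℕ} (x : (Unit ⊕ Fin m) → ℝ) :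
    x ∈ lorentzCone m ↔ 0 ≤ x (Sum.inl ()) ∧ ∑ i, x (Sum.inr i) ^ 2 ≤ x (Sum.inl ()) ^ 2 := by
  unfold lorentzCone
  exact Real.sqrt_le_iff

/-- The vector `(a, u)`. -/
def consVec {m : ℕ} (a : ℝ) (u : Fin m → ℝ) : (Unit ⊕ Fin m) → ℝ :=
  Sum.elim (fun _ => a) u

@[simp] lemma consVec_inl {m : ℕ} (a : ℝ) (u : Fin m → ℝ) (i : Unit) :
    consVec a u (Sum.inl i) = a := rfl

@[simp] lemma consVec_inr {m : ℕ} (a : ℝ) (u : Fin m → ℝ) (i : Fin m) :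
    consVec a u (Sum.inr i) = u i := rfl

lemma eq_consVec {m : ℕ} (x : (Unit ⊕ Fin m) → ℝ) :
    x = consVec (x (Sum.inl ())) (fun i => x (Sum.inr i)) := by
  ext (i | i) <;> rfl

lemma consVec_split {m : ℕ} (a : ℝ) (u : Fin m → ℝ) :
    consVec a u = a • consVec 1 0 + consVec 0 u := by
  ext (i | i) <;> simp

lemma consVec_neg {m : ℕ} (u : Fin m → ℝ) : consVec 0 (-u) = -consVec 0 u := by
  ext (i | i) <;> simp

lemma PreservesCone.mul {m : ℕ} {S T : Matrix (Unit ⊕ Fin m) (Unit ⊕ Fin m) ℝ}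
    (hS : PreservesCone S) (hT : PreservesCone T) : PreservesCone (S * T) := by
  intro x hx
  rw [← Matrix.mulVec_mulVec]
  exact hS _ (hT _ hx)

lemma PreservesCone.smul {m : ℕ} {S : Matrix (Unit ⊕ Fin m) (Unit ⊕ Fin m) ℝ}
    (hS : PreservesCone S) {c : ℝ} (hc : 0 ≤ c) : PreservesCone (c • S) := by
  intro x hx
  obtain ⟨h0, h1⟩ := (mem_lorentzCone_iff _).1 (hS x hx)
  rw [Matrix.smul_mulVec, mem_lorentzCone_iff]
  simp only [Pi.smul_apply, smul_eq_mul, mul_pow, ← Finset.mul_sum]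
  exact ⟨by positivity, by gcongr⟩

/-! ### The matrices `diag(1, M)` and `T_α` -/

lemma diagOne_mulVec {m : ℕ} (M : Matrix (Fin m) (Fin m) ℝ) (a : ℝ) (u : Fin m → ℝ) :
    diagOne M *ᵥ consVec a u = consVec a (M *ᵥ u) := by
  unfold diagOne consVec
  rw [Matrix.fromBlocks_mulVec]
  ext (i | i) <;> simp [Function.comp_def]

lemma diagOne_mul {m : ℕ} (M N : Matrix (Fin m) (Fin m) ℝ) :
    diagOne M * diagOne N = diagOne (M * N) := by
  simp [diagOne, Matrix.fromBlocks_multiply]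

lemma diagOne_one {m : ℕ} : diagOne (1 : Matrix (Fin m) (Fin m) ℝ) = 1 := by
  simp [diagOne]

lemma sum_sq_mulVec {m : ℕ} {M : Matrix (Fin m) (Fin m) ℝ} (hM : Mᵀ * M = 1) (u : Fin m → ℝ) :
    ∑ i, (M *ᵥ u) i ^ 2 = ∑ i, u i ^ 2 := by
  have h : (M *ᵥ u) ⬝ᵥ (M *ᵥ u) = u ⬝ᵥ u := by
    rw [Matrix.dotProduct_mulVec, ← Matrix.mulVec_transpose, Matrix.mulVec_mulVec, hM,
      Matrix.one_mulVec]
  simpa [dotProduct, ← pow_two] using h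

lemma preservesCone_diagOne {m : ℕ} {M : Matrix (Fin m) (Fin m) ℝ} (hM : Mᵀ * M = 1) :
    PreservesCone (diagOne M) := by
  intro x hx
  rw [eq_consVec x] at hx ⊢
  rw [diagOne_mulVec]
  rw [mem_lorentzCone_iff] at hx ⊢
  simpa [sum_sq_mulVec hM] using hx

lemma Talpha_mulVec (k : ℕ) (α a : ℝ) (u : Fin (k + 1) → ℝ) :
    (Talpha k α *ᵥ consVec a u) =
      consVec (√(1 + α ^ 2) * a + α * u 0)
        (Fin.cons (α * a + √(1 + α ^ 2) * u 0) (fun i => u i.succ)) := by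
  unfold Talpha consVec
  rw [Matrix.fromBlocks_mulVec]
  ext (i | i)
  · simp [Function.comp_def, Matrix.mulVec, dotProduct]
  · refine Fin.cases ?_ (fun i => ?_) i
    · simp [Function.comp_def, Matrix.mulVec, dotProduct, Fin.sum_univ_succ,
        (Fin.succ_ne_zero _).symm]
    · simp [Function.comp_def, Matrix.mulVec, dotProduct]

lemma preservesCone_Talpha (k : ℕ) (α : ℝ) : PreservesCone (Talpha k α) := by
  intro x hx
  rw [eq_consVec x] at hx ⊢
  generalize x (Sum.inl ()) = a at *
  generalize (fun i => x (Sum.inr i)) = u at *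
  rw [Talpha_mulVec]
  rw [mem_lorentzCone_iff] at hx ⊢
  simp only [consVec_inl, consVec_inr, Fin.sum_univ_succ, Fin.cons_zero, Fin.cons_succ] at hx ⊢
  obtain ⟨h0, h1⟩ := hx
  have hs : √(1 + α ^ 2) ^ 2 = 1 + α ^ 2 := Real.sq_sqrt (by positivity)
  have hs0 := Real.sqrt_nonneg (1 + α ^ 2)
  have hsum : 0 ≤ ∑ i : Fin k, u i.succ ^ 2 := Finset.sum_nonneg fun i _ => sq_nonneg _
  generalize √(1 + α ^ 2) = c at *
  constructor
  · have hu : |u 0| ≤ a := abs_le_of_sq_le_sq (by linarith) h0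
    have hα : |α| ≤ c := abs_le_of_sq_le_sq (by linarith) hs0
    have h2 : |α * u 0| ≤ c * a := by
      rw [abs_mul]
      gcongr
    linarith [neg_abs_le (α * u 0)]
  · nlinarith

lemma Talpha_mul_neg (k : ℕ) (α : ℝ) : Talpha k α * Talpha k (-α) = 1 := by
  apply Matrix.mulVec_injective
  funext x
  rw [← Matrix.mulVec_mulVec, eq_consVec x, Talpha_mulVec, Talpha_mulVec,
    Matrix.one_mulVec]
  have hs : √(1 + α ^ 2) ^ 2 = 1 + α ^ 2 := Real.sq_sqrt (by positivity)
  simp only [neg_sq, Fin.cons_zero, Fin.cons_succ]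
  generalize √(1 + α ^ 2) = c at *
  ext (i | i)
  · simp only [consVec_inl]
    linear_combination (x (Sum.inl ())) * hs
  · refine Fin.cases ?_ (fun i => ?_) i
    · simp only [consVec_inr, Fin.cons_zero]
      linear_combination (x (Sum.inr 0)) * hs
    · simp

/-! ### Automorphisms and inverses -/

lemma image_eq_of_inverse {m : ℕ} {S S' : Matrix (Unit ⊕ Fin m) (Unit ⊕ Fin m) ℝ}
    (h : S * S' = 1) (hS : PreservesCone S) (hS' : PreservesCone S') :
    S.mulVec '' lorentzCone m = lorentzCone m := by
  apply Set.Subset.antisymm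
  · rintro _ ⟨x, hx, rfl⟩
    exact hS x hx
  · intro x hx
    exact ⟨S' *ᵥ x, hS' x hx, by rw [Matrix.mulVec_mulVec, h, Matrix.one_mulVec]⟩

lemma consVec_sqrt_mem {m : ℕ} (u : Fin m → ℝ) :
    consVec (√(∑ i, u i ^ 2)) u ∈ lorentzCone m := by
  simp [lorentzCone]

/-- The cone spans the whole space, so an automorphism of the cone is an invertible matrix. -/
lemma exists_inverse_of_image_eq {m : ℕ} {S : Matrix (Unit ⊕ Fin m) (Unit ⊕ Fin m) ℝ}
    (h : S.mulVec '' lorentzCone m = lorentzCone m) :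
    PreservesCone S ∧ ∃ S', S * S' = 1 ∧ S' * S = 1 ∧ PreservesCone S' := by
  refine ⟨fun x hx => h ▸ Set.mem_image_of_mem _ hx, ?_⟩
  have hsurj : Function.Surjective S.mulVec := by
    intro x
    set s := √(∑ i, x (Sum.inr i) ^ 2) with hs
    have h1 : consVec (|x (Sum.inl ())| + s) (fun i => x (Sum.inr i)) ∈ lorentzCone m := by
      simp [lorentzCone, ← hs]
    have h2 : consVec (|x (Sum.inl ())| + s - x (Sum.inl ())) 0 ∈ lorentzCone m := by
      have := le_abs_self (x (Sum.inl ()))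
      have : 0 ≤ s := Real.sqrt_nonneg _
      simp only [lorentzCone, Set.mem_ofPred_eq, consVec_inr, consVec_inl]
      simp
      linarith
    rw [← h] at h1 h2
    obtain ⟨p, -, hp⟩ := h1
    obtain ⟨q, -, hq⟩ := h2
    refine ⟨p - q, ?_⟩
    rw [Matrix.mulVec_sub, hp, hq]
    ext (i | i) <;> simp
  have hu : IsUnit S := Matrix.mulVec_surjective_iff_isUnit.1 hsurj
  have hd := (Matrix.isUnit_iff_isUnit_det S).1 hu
  refine ⟨S⁻¹, Matrix.mul_nonsing_inv S hd, Matrix.nonsing_inv_mul S hd, fun x hx => ?_⟩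
  rw [← h] at hx
  obtain ⟨p, hp, rfl⟩ := hx
  rwa [Matrix.mulVec_mulVec, Matrix.nonsing_inv_mul S hd, Matrix.one_mulVec]

/-- Every vector is a nonnegative multiple of the first column of an orthogonal matrix. -/
lemma exists_orthogonal_column {k : ℕ} (w : Fin (k + 1) → ℝ) :
    ∃ V : Matrix (Fin (k + 1)) (Fin (k + 1)) ℝ, Vᵀ * V = 1 ∧
      ∀ i, w i = √(∑ i, w i ^ 2) * V i 0 := by
  obtain ⟨v, hv, hw⟩ : ∃ v : EuclideanSpace ℝ (Fin (k + 1)), ‖v‖ = 1 ∧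
      ∀ i, w i = √(∑ i, w i ^ 2) * v i := by
    have hn : ‖WithLp.toLp 2 w‖ = √(∑ i, w i ^ 2) := by
      simp [EuclideanSpace.norm_eq]
    by_cases h0 : WithLp.toLp 2 w = 0
    · refine ⟨EuclideanSpace.single 0 1, by simp, fun i => ?_⟩
      have : w = 0 := by simpa using h0
      simp [this]
    · have h1 : ‖WithLp.toLp 2 w‖ ≠ 0 := norm_ne_zero_iff.2 h0
      refine ⟨‖WithLp.toLp 2 w‖⁻¹ • WithLp.toLp 2 w, ?_, fun i => ?_⟩
      · rw [norm_smul, norm_inv, norm_norm, inv_mul_cancel₀ h1]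
      · rw [← hn]
        simp only [PiLp.smul_apply, smul_eq_mul]
        field_simp
  have ho : Orthonormal ℝ (({0} : Set (Fin (k + 1))).domRestrict fun _ => v) := by
    refine ⟨fun i => hv, fun i j hij => ?_⟩
    exact absurd (Subsingleton.elim i j) hij
  obtain ⟨b, hb⟩ := ho.exists_orthonormalBasis_extension_of_card_eq (by simp)
  refine ⟨Matrix.of fun i j => b j i, ?_, fun i => ?_⟩
  · ext i j
    have := b.inner_eq_ite i j
    simp only [PiLp.inner_apply, RCLike.inner_apply, conj_trivial] at this
    rw [Matrix.mul_apply, Matrix.one_apply, ← this]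
    exact Finset.sum_congr rfl fun l _ => by simp [mul_comm]
  · rw [Matrix.of_apply, hb 0 rfl]
    exact hw i

/-! ### The stabilizer of `e` -/

/-- A cone-preserving matrix fixing `e = (1, 0)` sends `(0, u)` to some `z` with
`‖z̄‖ + |z₀| ≤ ‖u‖`. -/
lemma norm_add_abs_le {m : ℕ} {R : Matrix (Unit ⊕ Fin m) (Unit ⊕ Fin m) ℝ}
    (hR : PreservesCone R) (he : R *ᵥ consVec 1 0 = consVec 1 0) (u : Fin m → ℝ) :
    √(∑ i, (R *ᵥ consVec 0 u) (Sum.inr i) ^ 2) + |(R *ᵥ consVec 0 u) (Sum.inl ())| ≤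
      √(∑ i, u i ^ 2) := by
  have h1 := hR _ (consVec_sqrt_mem u)
  have h2 := hR _ (consVec_sqrt_mem (-u))
  rw [consVec_split, Matrix.mulVec_add, Matrix.mulVec_smul, he] at h1 h2
  rw [consVec_neg, Matrix.mulVec_neg] at h2
  simp only [lorentzCone, Set.mem_ofPred_eq, Pi.add_apply, Pi.smul_apply, Pi.neg_apply,
    consVec_inr, consVec_inl, Pi.zero_apply, smul_eq_mul, mul_zero, zero_add, mul_one,
    neg_sq] at h1 h2
  rcases abs_cases ((R *ᵥ consVec 0 u) (Sum.inl ())) with h | h <;> linarith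

lemma orthogonal_of_sum_sq {m : ℕ} {M : Matrix (Fin m) (Fin m) ℝ}
    (h : ∀ u, ∑ i, (M *ᵥ u) i ^ 2 = ∑ i, u i ^ 2) : Mᵀ * M = 1 := by
  have h' : ∀ u, (M *ᵥ u) ⬝ᵥ (M *ᵥ u) = u ⬝ᵥ u := by
    intro u
    simpa [dotProduct, ← pow_two] using h u
  have hp : ∀ u v, (M *ᵥ u) ⬝ᵥ (M *ᵥ v) = u ⬝ᵥ v := by
    intro u v
    have h1 := h' (u + v)
    simp only [Matrix.mulVec_add, add_dotProduct, dotProduct_add, h'] at h1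
    rw [dotProduct_comm (M *ᵥ v), dotProduct_comm v u] at h1
    linarith
  ext i j
  have := hp (Pi.single i 1) (Pi.single j 1)
  rw [Matrix.mulVec_single_one, Matrix.mulVec_single_one] at this
  rw [Matrix.mul_apply, Matrix.one_apply]
  simpa [dotProduct, Pi.single_apply, eq_comm] using this

/-- A cone automorphism fixing `e = (1, 0)` is `diag(1, U)` with `U` orthogonal. -/
lemma exists_diagOne_of_fix {m : ℕ} {R R' : Matrix (Unit ⊕ Fin m) (Unit ⊕ Fin m) ℝ}
    (hR : PreservesCone R) (hR' : PreservesCone R') (h : R' * R = 1)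
    (he : R *ᵥ consVec 1 0 = consVec 1 0) :
    ∃ U : Matrix (Fin m) (Fin m) ℝ, Uᵀ * U = 1 ∧ R = diagOne U := by
  have he' : R' *ᵥ consVec 1 0 = consVec 1 0 := by
    conv_lhs => rw [← he, Matrix.mulVec_mulVec, h, Matrix.one_mulVec]
  have key : ∀ u : Fin m → ℝ, (R *ᵥ consVec 0 u) (Sum.inl ()) = 0 ∧
      ∑ i, (R *ᵥ consVec 0 u) (Sum.inr i) ^ 2 = ∑ i, u i ^ 2 := by
    intro u
    have h1 := norm_add_abs_le hR he u
    have h2 := norm_add_abs_le hR' he' (fun i => (R *ᵥ consVec 0 u) (Sum.inr i))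
    -- `(0, u) = R⁻¹ z = z₀ e + R⁻¹ (0, z̄)`, so `u` is the spatial part of `R⁻¹ (0, z̄)`
    have h3 : R' *ᵥ (R *ᵥ consVec 0 u) = consVec 0 u := by
      rw [Matrix.mulVec_mulVec, h, Matrix.one_mulVec]
    rw [eq_consVec (R *ᵥ consVec 0 u), consVec_split, Matrix.mulVec_add, Matrix.mulVec_smul,
      he'] at h3
    have h4 : ∀ i, (R' *ᵥ consVec 0 (fun i => (R *ᵥ consVec 0 u) (Sum.inr i))) (Sum.inr i)
        = u i := by
      intro i
      simpa using congrFun h3 (Sum.inr i)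
    simp only [h4] at h2
    have h5 := abs_nonneg ((R *ᵥ consVec 0 u) (Sum.inl ()))
    have h6 := abs_nonneg ((R' *ᵥ consVec 0 (fun i => (R *ᵥ consVec 0 u) (Sum.inr i)))
      (Sum.inl ()))
    refine ⟨abs_eq_zero.1 (by linarith), ?_⟩
    exact (Real.sqrt_inj (Finset.sum_nonneg fun _ _ => sq_nonneg _)
      (Finset.sum_nonneg fun _ _ => sq_nonneg _)).1 (by linarith)
  have hU : ∀ u : Fin m → ℝ, R *ᵥ consVec 0 u = consVec 0 (R.toBlocks₂₂ *ᵥ u) := by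
    intro u
    ext (i | i)
    · exact (key u).1
    · simp [Matrix.mulVec, dotProduct, Matrix.toBlocks₂₂]
  refine ⟨R.toBlocks₂₂, orthogonal_of_sum_sq fun u => ?_, ?_⟩
  · simpa [hU u] using (key u).2
  · apply Matrix.mulVec_injective
    funext x
    rw [eq_consVec x, diagOne_mulVec, consVec_split, Matrix.mulVec_add, Matrix.mulVec_smul, he,
      hU, ← consVec_split]

/-! ### The orbit of `e` -/

/-- The image of `e = (1, 0)` under an automorphism `S` of the cone is interior: with
`w = S⁻¹ e`, the vector `e - t w` is in the cone for small `t > 0`, hence so is `S e - t e`. -/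
lemma image_interior {m : ℕ} {S S' : Matrix (Unit ⊕ Fin m) (Unit ⊕ Fin m) ℝ}
    (hS : PreservesCone S) (h : S * S' = 1) (hS' : PreservesCone S') :
    √(∑ i, (S *ᵥ consVec 1 0) (Sum.inr i) ^ 2) < (S *ᵥ consVec 1 0) (Sum.inl ()) := by
  have he : (consVec 1 0 : (Unit ⊕ Fin m) → ℝ) ∈ lorentzCone m := by simp [lorentzCone]
  have hw := hS' _ he
  set w := S' *ᵥ consVec 1 0 with hwdef
  have hSw : S *ᵥ w = consVec 1 0 := by rw [hwdef, Matrix.mulVec_mulVec, h, Matrix.one_mulVec]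
  rw [mem_lorentzCone_iff] at hw
  obtain ⟨hw0, hw1⟩ := hw
  -- `t = 1 / (1 + 2 w₀)` makes `t w₀ ≤ 1 - t w₀`
  obtain ⟨t, ht, ht2⟩ : ∃ t : ℝ, 0 < t ∧ t * (1 + 2 * w (Sum.inl ())) = 1 :=
    ⟨(1 + 2 * w (Sum.inl ()))⁻¹, by positivity, inv_mul_cancel₀ (by positivity)⟩
  have hmem : consVec 1 0 - t • w ∈ lorentzCone m := by
    rw [mem_lorentzCone_iff]
    simp only [Pi.sub_apply, consVec_inl, consVec_inr, Pi.smul_apply, smul_eq_mul, Pi.zero_apply,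
      zero_sub, neg_sq, mul_pow, ← Finset.mul_sum]
    have h0 : 0 ≤ t * w (Sum.inl ()) := by positivity
    refine ⟨by linarith, ?_⟩
    calc t ^ 2 * ∑ i, w (Sum.inr i) ^ 2 ≤ t ^ 2 * w (Sum.inl ()) ^ 2 := by gcongr
      _ = (t * w (Sum.inl ())) ^ 2 := by ring
      _ ≤ _ := by
        apply pow_le_pow_left₀ h0
        linarith
  have := hS _ hmem
  rw [Matrix.mulVec_sub, Matrix.mulVec_smul, hSw] at this
  simp only [lorentzCone, Set.mem_ofPred_eq, Pi.sub_apply, Pi.smul_apply, consVec_inl, consVec_inr,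
    smul_eq_mul, mul_one, Pi.zero_apply, mul_zero, sub_zero] at this
  linarith

lemma boost_mul_neg {k : ℕ} {ν : ℝ} (hν : ν ≠ 0) (α : ℝ)
    {V : Matrix (Fin (k + 1)) (Fin (k + 1)) ℝ} (hV : Vᵀ * V = 1) :
    (ν • (diagOne V * Talpha k α * diagOne Vᵀ)) *
      (ν⁻¹ • (diagOne V * Talpha k (-α) * diagOne Vᵀ)) = 1 := by
  have hV' : V * Vᵀ = 1 := mul_eq_one_comm.1 hV
  rw [smul_mul_smul_comm, mul_inv_cancel₀ hν, one_smul]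
  calc diagOne V * Talpha k α * diagOne Vᵀ * (diagOne V * Talpha k (-α) * diagOne Vᵀ)
      = diagOne V * Talpha k α * (diagOne Vᵀ * diagOne V) * Talpha k (-α) * diagOne Vᵀ := by
        simp only [Matrix.mul_assoc]
    _ = diagOne V * (Talpha k α * Talpha k (-α)) * diagOne Vᵀ := by
        rw [diagOne_mul Vᵀ V, hV, diagOne_one, Matrix.mul_one]
        simp only [Matrix.mul_assoc]
    _ = 1 := by rw [Talpha_mul_neg, Matrix.mul_one, diagOne_mul, hV', diagOne_one]

lemma preservesCone_boost {k : ℕ} {ν : ℝ} (hν : 0 ≤ ν) (α : ℝ)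
    {V : Matrix (Fin (k + 1)) (Fin (k + 1)) ℝ} (hV : Vᵀ * V = 1) :
    PreservesCone (ν • (diagOne V * Talpha k α * diagOne Vᵀ)) := by
  have hV' : Vᵀᵀ * Vᵀ = 1 := by rw [Matrix.transpose_transpose]; exact mul_eq_one_comm.1 hV
  exact (((preservesCone_diagOne hV).mul (preservesCone_Talpha k α)).mul
    (preservesCone_diagOne hV')).smul hν

/-- Some `ν diag(1,V) T_α diag(1,Vᵀ)` carries `e = (1, 0)` to a prescribed interior vector `y`:
take `ν² = y₀² - ‖ȳ‖²` and `α = ‖ȳ‖ / ν`. -/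
lemma exists_boost {k : ℕ} (y : (Unit ⊕ Fin (k + 1)) → ℝ)
    (hy : √(∑ i, y (Sum.inr i) ^ 2) < y (Sum.inl ())) :
    ∃ (ν α : ℝ) (V : Matrix (Fin (k + 1)) (Fin (k + 1)) ℝ), 0 < ν ∧ 0 ≤ α ∧ Vᵀ * V = 1 ∧
      (ν • (diagOne V * Talpha k α * diagOne Vᵀ)) *ᵥ consVec 1 0 = y := by
  obtain ⟨V, hV, hVw⟩ := exists_orthogonal_column (fun i => y (Sum.inr i))
  have hr := Real.sqrt_nonneg (∑ i, y (Sum.inr i) ^ 2)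
  generalize √(∑ i, y (Sum.inr i) ^ 2) = r at *
  have hpos : 0 < y (Sum.inl ()) ^ 2 - r ^ 2 := by nlinarith
  have hν := Real.sqrt_pos.2 hpos
  have hν2 := Real.sq_sqrt hpos.le
  generalize √(y (Sum.inl ()) ^ 2 - r ^ 2) = ν at *
  refine ⟨ν, r / ν, V, hν, by positivity, hV, ?_⟩
  have hc : ν * √(1 + (r / ν) ^ 2) = y (Sum.inl ()) := by
    have h1 : 1 + (r / ν) ^ 2 = (y (Sum.inl ()) / ν) ^ 2 := by
      field_simp
      linarith
    rw [h1, Real.sqrt_sq (div_nonneg (by linarith) hν.le)]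
    field_simp
  rw [Matrix.smul_mulVec, ← Matrix.mulVec_mulVec, ← Matrix.mulVec_mulVec, diagOne_mulVec,
    Matrix.mulVec_zero, Talpha_mulVec, diagOne_mulVec]
  ext (i | i)
  · simpa using hc
  · rw [hVw i]
    simp only [Pi.smul_apply, consVec_inr, Matrix.mulVec, dotProduct, Fin.sum_univ_succ,
      Fin.cons_zero, Fin.cons_succ, Pi.zero_apply, smul_eq_mul]
    simp
    field_simp

/-- Representation theorem for Lorentz cone automorphisms (n = k + 2 > 1):
`S(L^n_+) = L^n_+` iff `S = ν · diag(1,V) · T_α · diag(1,Vᵀ) · diag(1,U)` for some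
`ν > 0`, `α ≥ 0` and orthogonal (n-1)×(n-1) matrices `U`, `V`. -/
theorem lorentz_cone_automorphism_representation (k : ℕ)
    (S : Matrix (Unit ⊕ Fin (k + 1)) (Unit ⊕ Fin (k + 1)) ℝ) :
    S.mulVec '' lorentzCone (k + 1) = lorentzCone (k + 1) ↔
      ∃ (ν α : ℝ) (U V : Matrix (Fin (k + 1)) (Fin (k + 1)) ℝ),
        0 < ν ∧ 0 ≤ α ∧ Uᵀ * U = 1 ∧ Vᵀ * V = 1 ∧
        S = ν • (diagOne V * Talpha k α * diagOne Vᵀ * diagOne U) := by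
  constructor
  · intro h
    obtain ⟨hS, S', hSS', hS'S, hS'⟩ := exists_inverse_of_image_eq h
    obtain ⟨ν, α, V, hν, hα, hV, hB⟩ := exists_boost _ (image_interior hS hSS' hS')
    have hBB := boost_mul_neg hν.ne' α hV
    have hBp := preservesCone_boost hν.le α hV
    have hBp' := preservesCone_boost (inv_nonneg.2 hν.le) (-α) hV
    have hBB' := mul_eq_one_comm.1 hBB
    set B := ν • (diagOne V * Talpha k α * diagOne Vᵀ) with hBdef
    set B' := ν⁻¹ • (diagOne V * Talpha k (-α) * diagOne Vᵀ)
    obtain ⟨U, hU, hR⟩ := exists_diagOne_of_fix (R := B' * S) (R' := S' * B) (hBp'.mul hS)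
      (hS'.mul hBp)
      (by rw [Matrix.mul_assoc, ← Matrix.mul_assoc B, hBB, Matrix.one_mul, hS'S])
      (by rw [← Matrix.mulVec_mulVec, ← hB, Matrix.mulVec_mulVec, hBB', Matrix.one_mulVec])
    refine ⟨ν, α, U, V, hν, hα, hU, hV, ?_⟩
    rw [← Matrix.smul_mul, ← hBdef, ← hR, ← Matrix.mul_assoc, hBB, Matrix.one_mul]
  · rintro ⟨ν, α, U, V, hν, hα, hU, hV, rfl⟩
    have hU' : U * Uᵀ = 1 := mul_eq_one_comm.1 hU
    rw [← Matrix.smul_mul]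
    refine image_eq_of_inverse
      (S' := diagOne Uᵀ * (ν⁻¹ • (diagOne V * Talpha k (-α) * diagOne Vᵀ))) ?_
      ((preservesCone_boost hν.le α hV).mul (preservesCone_diagOne hU))
      ((preservesCone_diagOne (by rwa [Matrix.transpose_transpose])).mul
        (preservesCone_boost (inv_nonneg.2 hν.le) (-α) hV))
    rw [Matrix.mul_assoc, ← Matrix.mul_assoc (diagOne U), diagOne_mul, hU', diagOne_one,
      Matrix.one_mul, boost_mul_neg hν.ne' α hV]
end

section
/- Let n > 1 and let S be an n×n real matrix with S(L^n_+) = L^n_+. Then there exist ν > 0, α ≥ 0, and orthogonal (n-1)×(n-1) real matrices U and V such that S = ν · diag(1, V) · T_α · diag(1, Vᵀ) · diag(1, U), where T_α is the n×n matrix whose upper-left 2×2 block is [[√(1+α²), α], [α, √(1+α²)]], whose lower-right (n-2)×(n-2) block is the identity, and whose remaining entries are zero. -/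
/-!
With `J = diag(1, -I)`, the cone automorphism `S` satisfies `Sᵀ J S = μ J` for some `μ > 0`.
Indeed `S` is invertible because the cone spans, and it sends boundary points of the cone to
boundary points: if `S x` were interior, then `S x - ε S e₀` would lie in the cone for some
`ε > 0`, hence so would `x - ε e₀`, which fails for `x` on the boundary. So the quadratic form
of `Sᵀ J S` vanishes on all `(1, u)` with `u` a unit vector, and such a form is a multiple of `J`
(`eq_smul_J`).

After rescaling, `A = S / √μ` is a Lorentz matrix with first column `(√(1 + |c|²), c)`. Taking `V`
orthogonal with `c = |c| V e₁` and `α = |c|`, the boost `P = diag(1, V) T_α diag(1, Vᵀ)` is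
symmetric, satisfies `P J P = J`, and has the same first column as `A`. Hence `P⁻¹ A = J P J A` is
a Lorentz matrix fixing `e₀`, which forces it to be `diag(1, U)` with `U` orthogonal.
-/

open Matrix

/-! ### The Lorentz form and the cone -/

/-- The matrix `diag(1, -I)` of the Lorentz quadratic form. -/
def lorJ (m : ℕ) : Matrix (Unit ⊕ Fin m) (Unit ⊕ Fin m) ℝ := Matrix.fromBlocks 1 0 0 (-1)

/-- The first standard basis vector `e₀ = (1, 0)`. -/
def vecE0 (m : ℕ) : (Unit ⊕ Fin m) → ℝ := Sum.elim (fun _ => 1) (fun _ => 0)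

lemma lorJ_mul_self (m : ℕ) : lorJ m * lorJ m = 1 := by
  simp [lorJ, Matrix.fromBlocks_multiply]

lemma lorJ_quad {m : ℕ} (x : (Unit ⊕ Fin m) → ℝ) :
    x ⬝ᵥ (lorJ m *ᵥ x) = x (Sum.inl ()) ^ 2 - ∑ i, x (Sum.inr i) ^ 2 := by
  simp [lorJ, Matrix.fromBlocks_mulVec, dotProduct, Matrix.neg_mulVec, pow_two, sub_eq_add_neg]

lemma sqrt_sum_sub_smul_le {m : ℕ} (x y : (Unit ⊕ Fin m) → ℝ) (t : ℝ) (ht : 0 ≤ t) :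
    Real.sqrt (∑ i, ((x - t • y) (Sum.inr i)) ^ 2) ≤
      Real.sqrt (∑ i, (x (Sum.inr i)) ^ 2) + t * Real.sqrt (∑ i, (y (Sum.inr i)) ^ 2) := by
  have h := norm_sub_le (WithLp.toLp 2 (fun i => x (Sum.inr i)) : EuclideanSpace ℝ (Fin m))
    (t • WithLp.toLp 2 (fun i => y (Sum.inr i)))
  rw [norm_smul, Real.norm_of_nonneg ht] at h
  simpa [EuclideanSpace.norm_eq] using h

lemma vecE0_mem (m : ℕ) : vecE0 m ∈ lorentzCone m := by
  simp [lorentzCone, vecE0]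

/-- Every vector becomes a cone element after adding a multiple of `e₀`, so the cone spans. -/
lemma mulVec_surjective {m : ℕ} (S : Matrix (Unit ⊕ Fin m) (Unit ⊕ Fin m) ℝ)
    (hS : S.mulVec '' lorentzCone m = lorentzCone m) : Function.Surjective S.mulVec := by
  intro x
  set t := Real.sqrt (∑ i, (x (Sum.inr i)) ^ 2) - x (Sum.inl ()) with ht
  have h1 : x + t • vecE0 m ∈ lorentzCone m := by
    simp [lorentzCone, vecE0, ht]
  have h2 := vecE0_mem m
  rw [← hS] at h1 h2
  obtain ⟨y, -, hy⟩ := h1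
  obtain ⟨z, -, hz⟩ := h2
  refine ⟨y - t • z, ?_⟩
  change S *ᵥ y = _ at hy
  change S *ᵥ z = _ at hz
  rw [Matrix.mulVec_sub, Matrix.mulVec_smul, hy, hz]
  simp

/-! ### Cone automorphisms are conformal for the Lorentz form -/

/-- A cone automorphism maps boundary points of the cone to boundary points. -/
lemma null_map {m : ℕ} (S : Matrix (Unit ⊕ Fin m) (Unit ⊕ Fin m) ℝ)
    (hS : S.mulVec '' lorentzCone m = lorentzCone m) (hinj : Function.Injective S.mulVec)
    (x : (Unit ⊕ Fin m) → ℝ)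
    (hx : Real.sqrt (∑ i, (x (Sum.inr i)) ^ 2) = x (Sum.inl ())) :
    (S *ᵥ x) ⬝ᵥ (lorJ m *ᵥ (S *ᵥ x)) = 0 := by
  have hmap : ∀ y ∈ lorentzCone m, S *ᵥ y ∈ lorentzCone m := fun y hy => by
    rw [← hS]; exact ⟨y, hy, rfl⟩
  have hSx : Real.sqrt (∑ i, ((S *ᵥ x) (Sum.inr i)) ^ 2) ≤ (S *ᵥ x) (Sum.inl ()) :=
    hmap x hx.le
  have hSe : Real.sqrt (∑ i, ((S *ᵥ vecE0 m) (Sum.inr i)) ^ 2) ≤ (S *ᵥ vecE0 m) (Sum.inl ()) :=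
    hmap _ (vecE0_mem m)
  rcases hSx.eq_or_lt with h | h
  · rw [lorJ_quad, ← h, Real.sq_sqrt (Finset.sum_nonneg fun i _ => sq_nonneg _), sub_self]
  · exfalso
    set p := (S *ᵥ vecE0 m) (Sum.inl ()) with hp
    have hp0 : 0 ≤ p := (Real.sqrt_nonneg _).trans hSe
    set d := (S *ᵥ x) (Sum.inl ()) - Real.sqrt (∑ i, ((S *ᵥ x) (Sum.inr i)) ^ 2) with hd
    have hd0 : 0 < d := sub_pos.2 h
    have ht : 0 < d / (2 * p + 1) := by positivity
    set t := d / (2 * p + 1) with htd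
    have htp : t * (2 * p + 1) = d := by rw [htd]; field_simp
    have hmem : S *ᵥ (x - t • vecE0 m) ∈ lorentzCone m := by
      rw [Matrix.mulVec_sub, Matrix.mulVec_smul]
      change Real.sqrt _ ≤ _
      refine (sqrt_sum_sub_smul_le _ _ t ht.le).trans ?_
      have := mul_le_mul_of_nonneg_left hSe ht.le
      simp only [Pi.sub_apply, Pi.smul_apply, smul_eq_mul, ← hp]
      linarith
    rw [← hS] at hmem
    obtain ⟨y, hy, hyx⟩ := hmem
    rw [hinj hyx] at hy
    have hy' : Real.sqrt (∑ i, ((x - t • vecE0 m) (Sum.inr i)) ^ 2)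
      ≤ (x - t • vecE0 m) (Sum.inl ()) := hy
    simp [vecE0, hx] at hy'
    linarith

/-- A symmetric matrix whose quadratic form vanishes on all `(1, u)` with `|u| = 1` is a
multiple of `J`. -/
lemma eq_smul_J {m : ℕ} (M : Matrix (Unit ⊕ Fin m) (Unit ⊕ Fin m) ℝ) (hM : Mᵀ = M)
    (h : ∀ u : Fin m → ℝ, ∑ i, u i ^ 2 = 1 →
      Sum.elim (fun _ => 1) u ⬝ᵥ (M *ᵥ Sum.elim (fun _ => 1) u) = 0) :
    M = M (Sum.inl ()) (Sum.inl ()) • lorJ m := by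
  have hs : ∀ i j, M i j = M j i := fun i j => by
    conv_lhs => rw [← hM]
    rfl
  -- the form at `(1, c eᵢ)`
  have h1 : ∀ (i : Fin m) (c : ℝ), c ^ 2 = 1 →
      M (Sum.inl ()) (Sum.inl ()) + 2 * c * M (Sum.inl ()) (Sum.inr i)
        + M (Sum.inr i) (Sum.inr i) = 0 := by
    intro i c hc
    have := h (Pi.single i c) (by
      rw [Finset.sum_eq_single i] <;> simp +contextual [hc])
    simp only [dotProduct, Matrix.mulVec, Fintype.sum_sum_type, Sum.elim_inl, Sum.elim_inr,
      Finset.univ_unique, Finset.sum_singleton, Pi.single_apply, mul_ite, ite_mul, mul_zero,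
      zero_mul, Finset.sum_ite_eq', Finset.mem_univ, if_true, mul_one, one_mul] at this
    rw [hs (Sum.inr i) (Sum.inl _)] at this
    linear_combination this - M (Sum.inr i) (Sum.inr i) * hc
  have hb : ∀ i, M (Sum.inl ()) (Sum.inr i) = 0 := fun i => by
    linarith [h1 i 1 (by norm_num), h1 i (-1) (by norm_num)]
  have hd : ∀ i, M (Sum.inr i) (Sum.inr i) = - M (Sum.inl ()) (Sum.inl ()) := fun i => by
    linarith [h1 i 1 (by norm_num), h1 i (-1) (by norm_num)]
  -- `3/5, 4/5` is a rational point of the unit circle with both coordinates nonzero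
  have ho : ∀ i j, i ≠ j → M (Sum.inr i) (Sum.inr j) = 0 := by
    intro i j hij
    have := h (Pi.single i (3/5) + Pi.single j (4/5)) (by
      have : ∀ l, ((Pi.single i (3/5) + Pi.single j (4/5) : Fin m → ℝ) l) ^ 2
          = (if l = i then 9/25 else 0) + (if l = j then 16/25 else 0) := by
        intro l
        simp only [Pi.add_apply, Pi.single_apply]
        by_cases hi : l = i
        · subst hi; simp [hij]; norm_num
        · by_cases hj : l = j
          · subst hj; simp [hi]; norm_num
          · simp [hi, hj]
      simp only [this, Finset.sum_add_distrib]
      simp; norm_num)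
    simp only [dotProduct, Matrix.mulVec, Fintype.sum_sum_type, Sum.elim_inl, Sum.elim_inr,
      Finset.univ_unique, Finset.sum_singleton, Pi.add_apply, Pi.single_apply, mul_ite, ite_mul,
      mul_zero, mul_add, add_mul, Finset.sum_add_distrib,
      zero_mul, Finset.sum_ite_eq', Finset.mem_univ, if_true, mul_one, one_mul] at this
    have e1 := hs (Sum.inr j) (Sum.inr i)
    have e2 := hs (Sum.inr i) (Sum.inl ())
    have e3 := hs (Sum.inr j) (Sum.inl ())
    have e4 := hb i
    have e5 := hb j
    have e6 := hd i
    have e7 := hd j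
    simp only [PUnit.default_eq_unit, e1, e2, e3, e4, e5, e6, e7] at this
    linarith
  ext i j
  rcases i with i | i <;> rcases j with j | j
  · simp [lorJ]
  · simp [lorJ, hb]
  · simp [lorJ, hs (Sum.inr i), hb]
  · by_cases hij : i = j
    · subst hij; simp [lorJ, hd]
    · simp [lorJ, ho i j hij, hij]

/-! ### Boosts and Lorentz matrices -/

lemma exists_orthogonal_col {k : ℕ} (c : Fin (k + 1) → ℝ) :
    ∃ V : Matrix (Fin (k + 1)) (Fin (k + 1)) ℝ, Vᵀ * V = 1 ∧
      ∀ i, V i 0 * Real.sqrt (∑ i, c i ^ 2) = c i := by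
  set w : EuclideanSpace ℝ (Fin (k + 1)) := WithLp.toLp 2 c with hw
  have hn : ‖w‖ = Real.sqrt (∑ i, c i ^ 2) := by simp [hw, EuclideanSpace.norm_eq]
  obtain ⟨v, hv1, hv2⟩ : ∃ v : EuclideanSpace ℝ (Fin (k + 1)), ‖v‖ = 1 ∧ ‖w‖ • v = w := by
    by_cases h0 : w = 0
    · exact ⟨EuclideanSpace.single 0 1, by simp, by simp [h0]⟩
    · have : ‖w‖ ≠ 0 := norm_ne_zero_iff.2 h0
      exact ⟨‖w‖⁻¹ • w, by simp [norm_smul, this], by simp [smul_smul, this]⟩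
  obtain ⟨b, hb⟩ := Orthonormal.exists_orthonormalBasis_extension_of_card_eq
    (𝕜 := ℝ) (ι := Fin (k + 1)) (E := EuclideanSpace ℝ (Fin (k + 1))) (by simp)
    (v := fun _ => v) (s := {0}) (by
      rw [orthonormal_iff_ite]
      rintro ⟨i, rfl⟩ ⟨j, rfl⟩
      simp [hv1])
  refine ⟨Matrix.of fun i j => b j i, ?_, ?_⟩
  · ext i j
    have := orthonormal_iff_ite.1 b.orthonormal i j
    simp only [PiLp.inner_apply, RCLike.inner_apply, conj_trivial] at this
    simp only [Matrix.mul_apply, Matrix.transpose_apply, Matrix.of_apply, Matrix.one_apply, ← this]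
    exact Finset.sum_congr rfl fun _ _ => mul_comm _ _
  · intro i
    have h2 : (‖w‖ • v) i = c i := by rw [hv2]
    simp only [Matrix.of_apply, hb 0 rfl, ← hn]
    rw [← h2]
    simp [mul_comm]

lemma diagOne_J {m : ℕ} (V : Matrix (Fin m) (Fin m) ℝ) (hV : Vᵀ * V = 1) :
    diagOne Vᵀ * lorJ m * diagOne V = lorJ m := by
  simp [diagOne, lorJ, Matrix.fromBlocks_multiply, hV]

lemma Talpha_transpose (k : ℕ) (α : ℝ) : (Talpha k α)ᵀ = Talpha k α := by
  ext i j
  rcases i with i | i <;> rcases j with j | j <;> simp [Talpha, and_comm, eq_comm]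

lemma Talpha_J (k : ℕ) (α : ℝ) :
    Talpha k α * lorJ (k + 1) * Talpha k α = lorJ (k + 1) := by
  have hs : Real.sqrt (1 + α ^ 2) * Real.sqrt (1 + α ^ 2) = 1 + α ^ 2 :=
    Real.mul_self_sqrt (by positivity)
  ext i j
  rcases i with i | i <;> rcases j with j | j
  · simp [Talpha, lorJ, Matrix.fromBlocks_multiply, Matrix.mul_apply, hs]
    ring
  · cases j using Fin.cases <;>
    simp [Talpha, lorJ, Matrix.fromBlocks_multiply, Matrix.mul_apply, Fin.sum_univ_succ]
    ring
  · cases i using Fin.cases <;>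
    simp [Talpha, lorJ, Matrix.fromBlocks_multiply, Matrix.mul_apply]
    ring
  · cases i using Fin.cases <;> cases j using Fin.cases <;>
    simp [Talpha, lorJ, Matrix.fromBlocks_multiply, Matrix.mul_apply, Fin.sum_univ_succ, hs,
      Matrix.one_apply]
    ring

/-- A Lorentz matrix fixing `e₀` is `diag(1, U)` with `U` orthogonal. -/
lemma eq_diagOne {m : ℕ} (B : Matrix (Unit ⊕ Fin m) (Unit ⊕ Fin m) ℝ)
    (hB : Bᵀ * lorJ m * B = lorJ m) (h0 : B *ᵥ vecE0 m = vecE0 m) :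
    ∃ U : Matrix (Fin m) (Fin m) ℝ, Uᵀ * U = 1 ∧ B = diagOne U := by
  obtain ⟨a, b, c, U, rfl⟩ : ∃ a b c U, B = Matrix.fromBlocks a b c U :=
    ⟨_, _, _, _, (Matrix.fromBlocks_toBlocks B).symm⟩
  have ha : a = 1 := by
    ext i j
    have := congrFun h0 (Sum.inl ())
    simpa [Matrix.fromBlocks_mulVec, vecE0, Matrix.mulVec, dotProduct] using this
  have hc : c = 0 := by
    ext i j
    have := congrFun h0 (Sum.inr i)
    simpa [Matrix.fromBlocks_mulVec, vecE0, Matrix.mulVec, dotProduct] using this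
  subst ha hc
  simp only [lorJ, Matrix.fromBlocks_transpose, Matrix.fromBlocks_multiply,
    Matrix.fromBlocks_inj] at hB
  obtain ⟨-, hb, -, hU⟩ := hB
  have hb : b = 0 := by simpa using hb
  subst hb
  exact ⟨U, by simpa using hU, rfl⟩

/-! ### The decomposition -/

/-- If `S(L^n_+) = L^n_+` (n = k + 2 > 1), then
`S = ν · diag(1,V) · T_α · diag(1,Vᵀ) · diag(1,U)` for some `ν > 0`, `α ≥ 0`
and orthogonal (n-1)×(n-1) matrices `U`, `V`. -/
theorem lorentz_cone_automorphism_has_representation (k : ℕ)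
    (S : Matrix (Unit ⊕ Fin (k + 1)) (Unit ⊕ Fin (k + 1)) ℝ)
    (hS : S.mulVec '' lorentzCone (k + 1) = lorentzCone (k + 1)) :
    ∃ (ν α : ℝ) (U V : Matrix (Fin (k + 1)) (Fin (k + 1)) ℝ),
      0 < ν ∧ 0 ≤ α ∧ Uᵀ * U = 1 ∧ Vᵀ * V = 1 ∧
      S = ν • (diagOne V * Talpha k α * diagOne Vᵀ * diagOne U) := by
  have hunit : IsUnit S := Matrix.mulVec_surjective_iff_isUnit.1 (mulVec_surjective S hS)
  have hinj : Function.Injective S.mulVec := Matrix.mulVec_injective_iff_isUnit.2 hunit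
  set J := lorJ (k + 1) with hJ
  have hJJ : J * J = 1 := lorJ_mul_self _
  have hJT : Jᵀ = J := by simp [hJ, lorJ, Matrix.fromBlocks_transpose]
  have hquad : ∀ x, x ⬝ᵥ ((Sᵀ * J * S) *ᵥ x) = (S *ᵥ x) ⬝ᵥ (J *ᵥ (S *ᵥ x)) := by
    intro x
    rw [← Matrix.mulVec_mulVec, ← Matrix.mulVec_mulVec, Matrix.dotProduct_mulVec,
      Matrix.vecMul_transpose]
  have hM := eq_smul_J (Sᵀ * J * S) (by simp [Matrix.transpose_mul, hJT, Matrix.mul_assoc])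
    (by
      intro u hu
      rw [hquad]
      exact null_map S hS hinj _ (by simp [hu]))
  set μ := (Sᵀ * J * S) (Sum.inl ()) (Sum.inl ()) with hμ
  have hSe : S *ᵥ vecE0 (k + 1) ∈ lorentzCone (k + 1) := by
    rw [← hS]; exact ⟨_, vecE0_mem _, rfl⟩
  change Real.sqrt _ ≤ _ at hSe
  have hcol : ∀ M : Matrix (Unit ⊕ Fin (k + 1)) (Unit ⊕ Fin (k + 1)) ℝ, ∀ i,
      (M *ᵥ vecE0 (k + 1)) i = M i (Sum.inl ()) := by
    intro M i
    simp [Matrix.mulVec, dotProduct, vecE0]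
  simp only [hcol] at hSe
  have hμq : μ = S (Sum.inl ()) (Sum.inl ()) ^ 2 - ∑ i, S (Sum.inr i) (Sum.inl ()) ^ 2 := by
    have h1 := hquad (vecE0 (k + 1))
    rw [lorJ_quad] at h1
    simp only [hcol] at h1
    rw [← h1]
    simp only [dotProduct, hcol]
    simp [vecE0, hμ]
  have hμ0 : 0 ≤ μ := by
    rw [hμq, sub_nonneg]
    exact (Real.sqrt_le_iff.1 hSe).2
  have hμ1 : μ ≠ 0 := by
    intro h
    rw [h, zero_smul] at hM
    have hJu : IsUnit J := IsUnit.of_mul_eq_one _ hJJ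
    have hSt : IsUnit Sᵀ := (Matrix.isUnit_transpose S).2 hunit
    have := (hSt.mul hJu).mul hunit
    rw [hM] at this
    exact not_isUnit_zero this
  have hμp : 0 < μ := lt_of_le_of_ne hμ0 hμ1.symm
  have hν : 0 < Real.sqrt μ := Real.sqrt_pos.2 hμp
  have hνsq : Real.sqrt μ * Real.sqrt μ = μ := Real.mul_self_sqrt hμ0
  set ν := Real.sqrt μ with hνd
  obtain ⟨A, hA⟩ : ∃ A, S = ν • A := ⟨ν⁻¹ • S, by simp [smul_smul, hν.ne']⟩
  have hAJ : Aᵀ * J * A = J := by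
    rw [hA] at hM
    simp only [Matrix.transpose_smul, Matrix.smul_mul, Matrix.mul_smul, smul_smul, hνsq] at hM
    exact smul_right_injective _ hμ1 hM
  set c : Fin (k + 1) → ℝ := fun i => A (Sum.inr i) (Sum.inl ()) with hc
  obtain ⟨V, hV, hVc⟩ := exists_orthogonal_col c
  set α := Real.sqrt (∑ i, c i ^ 2) with hα
  have hα2 : α ^ 2 = ∑ i, c i ^ 2 := Real.sq_sqrt (Finset.sum_nonneg fun i _ => sq_nonneg _)
  have hA00 : Real.sqrt (1 + α ^ 2) = A (Sum.inl ()) (Sum.inl ()) := by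
    have h0 : 0 ≤ A (Sum.inl ()) (Sum.inl ()) := by
      have : 0 ≤ ν * A (Sum.inl ()) (Sum.inl ()) := by
        have := (Real.sqrt_nonneg _).trans hSe
        rw [hA] at this
        simpa using this
      exact nonneg_of_mul_nonneg_right this hν
    have h1 : μ * A (Sum.inl ()) (Sum.inl ()) ^ 2 - μ * ∑ i, c i ^ 2 = μ := by
      conv_rhs => rw [hμq, hA]
      simp only [Matrix.smul_apply, smul_eq_mul, mul_pow, ← Finset.mul_sum, pow_two ν, hνsq, hc]
    have h2 : 1 + α ^ 2 = A (Sum.inl ()) (Sum.inl ()) ^ 2 := by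
      rw [hα2]
      apply mul_left_cancel₀ hμ1
      linarith
    rw [h2, Real.sqrt_sq h0]
  set P := diagOne V * Talpha k α * diagOne Vᵀ with hP
  have hdT : ∀ W : Matrix (Fin (k + 1)) (Fin (k + 1)) ℝ, (diagOne W)ᵀ = diagOne Wᵀ := by
    intro W; simp [diagOne, Matrix.fromBlocks_transpose]
  have hPT : Pᵀ = P := by
    simp only [hP, Matrix.transpose_mul, hdT, Talpha_transpose, Matrix.transpose_transpose,
      Matrix.mul_assoc]
  have hV' : V * Vᵀ = 1 := mul_eq_one_comm.1 hV
  have hPJ : P * J * P = J := by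
    have h1 := diagOne_J V hV
    have h2 := diagOne_J Vᵀ (by simpa using hV')
    have h3 := Talpha_J k α
    rw [Matrix.transpose_transpose] at h2
    rw [← hJ] at h1 h2 h3
    calc P * J * P = diagOne V * (Talpha k α * (diagOne Vᵀ * J * diagOne V) * Talpha k α)
          * diagOne Vᵀ := by simp only [hP, Matrix.mul_assoc]
      _ = J := by rw [h1, h3, h2]
  have hPe : P *ᵥ vecE0 (k + 1) = A *ᵥ vecE0 (k + 1) := by
    have e1 : diagOne Vᵀ *ᵥ vecE0 (k + 1) = vecE0 (k + 1) := by
      ext i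
      rw [hcol]
      rcases i with i | i <;> simp [diagOne, vecE0]
    rw [hP, ← Matrix.mulVec_mulVec, e1]
    ext i
    rw [hcol, hcol]
    rcases i with i | i
    · simp [diagOne, Talpha, Matrix.fromBlocks_multiply, hA00]
    · simp [diagOne, Talpha, Matrix.mul_apply, hVc, hc]
  obtain ⟨U, hU, hBU⟩ := eq_diagOne (J * P * J * A) (by
      rw [← hJ]
      calc (J * P * J * A)ᵀ * J * (J * P * J * A)
          = Aᵀ * (J * P * (J * J) * (J * P * J)) * A := by
            simp only [Matrix.transpose_mul, hJT, hPT, Matrix.mul_assoc]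
        _ = Aᵀ * (J * (P * J * P) * J) * A := by
            rw [hJJ]; simp only [Matrix.mul_assoc, Matrix.one_mul]
        _ = J := by rw [hPJ, hJJ, Matrix.one_mul, hAJ])
    (by
      rw [← Matrix.mulVec_mulVec, ← hPe, Matrix.mulVec_mulVec]
      have : J * P * J * P = 1 := by
        rw [Matrix.mul_assoc J P J, Matrix.mul_assoc J, hPJ, hJJ]
      rw [this, Matrix.one_mulVec])
  refine ⟨ν, α, U, V, hν, Real.sqrt_nonneg _, hU, hV, ?_⟩
  rw [← hP, ← hBU, hA]
  congr 1
  calc A = (J * J) * A := by rw [hJJ, Matrix.one_mul]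
    _ = (P * J * P) * J * A := by rw [hPJ]
    _ = P * (J * P * J * A) := by simp only [Matrix.mul_assoc]
end

section
/- Let n > 1 and let S be an n×n real matrix satisfying S(L^n_+) = L^n_+. Write S in block form S = [[a, bᵀ], [c, D]] with a ∈ ℝ, b, c ∈ ℝ^{n-1}, and D an (n-1)×(n-1) matrix. Then a > ‖c‖. -/
/-!
The unit element `e = (1, 0)` is an interior point of the cone. Since `S` maps onto the cone,
`e = S x` for some `x` in the cone, and interiority gives `t > 0` with `e - t • x` in the cone.
Applying `S`, the vector `S e - t • e = (a - t, c)` lies in the cone, so `‖c‖ ≤ a - t < a`.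
-/

open Matrix

/-- If `S(L^n_+) = L^n_+` (n = k + 2 > 1) and `S = [[a, bᵀ], [c, D]]` in block form
(so `a = S₀₀` and `c` is the rest of the first column), then `a > ‖c‖`. -/
theorem lorentz_cone_automorphism_first_column (k : ℕ)
    (S : Matrix (Unit ⊕ Fin (k + 1)) (Unit ⊕ Fin (k + 1)) ℝ)
    (hS : S.mulVec '' lorentzCone (k + 1) = lorentzCone (k + 1))
    (a : ℝ) (b c : Fin (k + 1) → ℝ) (D : Matrix (Fin (k + 1)) (Fin (k + 1)) ℝ)
    (hblock : S = Matrix.fromBlocks (Matrix.of fun _ _ => a)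
      (Matrix.of fun _ j => b j) (Matrix.of fun i _ => c i) D) :
    Real.sqrt (∑ i, (c i) ^ 2) < a := by
  have he : (Sum.elim (fun _ => 1) (fun _ => 0) : Unit ⊕ Fin (k + 1) → ℝ) ∈
      lorentzCone (k + 1) := by
    simp [lorentzCone]
  set e : Unit ⊕ Fin (k + 1) → ℝ := Sum.elim (fun _ => 1) (fun _ => 0) with he_def
  obtain ⟨x, hx, hxe⟩ : e ∈ S.mulVec '' lorentzCone (k + 1) := by rwa [hS]
  have hx' : Real.sqrt (∑ i, (x (Sum.inr i)) ^ 2) ≤ x (Sum.inl ()) := hx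
  have hx0 : 0 ≤ x (Sum.inl ()) := (Real.sqrt_nonneg _).trans hx'
  -- `t` is chosen so that `t * (x₀ + ‖x̄‖) ≤ 2 * t * x₀ ≤ 1`.
  obtain ⟨t, ht, htx⟩ : ∃ t : ℝ, 0 < t ∧ t * (2 * x (Sum.inl ())) ≤ 1 := by
    refine ⟨1 / (2 * x (Sum.inl ()) + 1), by positivity, ?_⟩
    rw [div_mul_eq_mul_div, div_le_one (by positivity)]
    linarith
  have hy : e - t • x ∈ lorentzCone (k + 1) := by
    have h1 : Real.sqrt (∑ i, ((e - t • x) (Sum.inr i)) ^ 2)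
        = t * Real.sqrt (∑ i, (x (Sum.inr i)) ^ 2) := by
      have h2 : ∑ i, ((e - t • x) (Sum.inr i)) ^ 2 = t ^ 2 * ∑ i, (x (Sum.inr i)) ^ 2 := by
        simp [he_def, Finset.mul_sum, mul_pow]
      rw [h2, Real.sqrt_mul (sq_nonneg t), Real.sqrt_sq ht.le]
    have h3 : (e - t • x) (Sum.inl ()) = 1 - t * x (Sum.inl ()) := by simp [he_def]
    change Real.sqrt _ ≤ _
    rw [h1, h3]
    nlinarith [mul_le_mul_of_nonneg_left hx' ht.le]
  have hSy : S.mulVec (e - t • x) ∈ lorentzCone (k + 1) :=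
    hS.subset (Set.mem_image_of_mem _ hy)
  have hSe : S.mulVec e = Sum.elim (fun _ => a) c := by
    rw [hblock, he_def, Matrix.fromBlocks_mulVec]
    ext (i | i) <;> simp [Matrix.mulVec, dotProduct]
  rw [Matrix.mulVec_sub, Matrix.mulVec_smul, hxe, hSe] at hSy
  have hfin : Real.sqrt (∑ i, (c i) ^ 2) ≤ a - t := by
    simpa [lorentzCone, he_def] using hSy
  linarith
end

section
/- Let b, c ∈ ℝ^{m}, let D be an m×m real matrix, and let a = √(1 + ‖c‖²). Assume a·b = Dᵀc and D Dᵀ = I + c cᵀ, and assume D is invertible. Then DᵀD = I + b bᵀ. -/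
open Matrix

/-!
Applying `D` to `a b = Dᵀ c` gives `a (D b) = (I + c cᵀ) c = (1 + ‖c‖²) c = a² c`, hence `D b = a c`
because `a > 0`. Therefore `D (Dᵀ D) = (I + c cᵀ) D = D + c (Dᵀ c)ᵀ = D + a c bᵀ = D (I + b bᵀ)`,
and `D` cancels on the left.
-/

/-- If `a = √(1 + ‖c‖²)`, `a·b = Dᵀc`, `D Dᵀ = I + c cᵀ` and `D` is invertible,
then `DᵀD = I + b bᵀ`. -/
theorem DtD_eq_one_add_bbT (m : ℕ) (b c : Fin m → ℝ) (D : Matrix (Fin m) (Fin m) ℝ)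
    (a : ℝ) (ha : a = Real.sqrt (1 + ∑ i, (c i) ^ 2))
    (hA2 : a • b = Dᵀ.mulVec c)
    (hB3 : D * Dᵀ = 1 + Matrix.vecMulVec c c)
    (hD : IsUnit D) :
    Dᵀ * D = 1 + Matrix.vecMulVec b b := by
  have hpos : 0 < 1 + ∑ i, (c i) ^ 2 := by positivity
  have ha0 : a ≠ 0 := by
    rw [ha]
    exact (Real.sqrt_pos.mpr hpos).ne'
  have hcc : 1 + c ⬝ᵥ c = a * a := by
    rw [ha, Real.mul_self_sqrt hpos.le]
    simp [dotProduct, sq]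
  have hDb : D *ᵥ b = a • c := by
    have h : a • (D *ᵥ b) = a • (a • c) := by
      rw [← mulVec_smul, hA2, mulVec_mulVec, hB3, add_mulVec, one_mulVec, smul_smul, ← hcc,
        add_smul, one_smul, vecMulVec_mulVec, op_smul_eq_smul]
    exact smul_right_injective _ ha0 h
  apply hD.mul_left_cancel
  rw [← mul_assoc, hB3, add_mul, one_mul, mul_add, mul_one, vecMulVec_mul, mul_vecMulVec,
    ← mulVec_transpose, ← hA2, hDb, vecMulVec_smul, smul_vecMulVec]
end

section
/- Let n > 1 and let S be an n×n real matrix with S(L^n_+) = L^n_+. Then there exist ν > 0, a vector c ∈ ℝ^{n-1}, and an orthogonal (n-1)×(n-1) matrix U such that S = ν · [[a, cᵀ], [c, P]] · diag(1, U), where a = √(1 + ‖c‖²) and P is the unique positive-semidefinite square root of I + c cᵀ. -/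
/-!
The proof compares `S` with the Minkowski form `J = diag(1, -1, …, -1)`.

Since the cone spans the space, `S` is invertible, and `S⁻¹` preserves the cone as well. A vector
`x` of the cone lies on its boundary exactly when `x - ε e₀` leaves the cone for every `ε > 0`, so
`S` maps the light cone into itself (`minkowski_map_eq_zero`). Hence the quadratic form `Sᵀ J S`
vanishes on the light cone, and this forces `Sᵀ J S = μ J` (`eq_smul_minkowskiJ`), with `μ > 0`
because `S` is invertible and maps `e₀` into the cone.

After dividing by `ν = √μ`, the matrix is a Lorentz transformation `[[a, dᵀ], [c, Q]]` with
`a = √(1 + ‖c‖²)`, `Q Qᵀ = 1 + c cᵀ` and `Qᵀ c = a d`. The positive-semidefinite root of `1 + c cᵀ`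
is `P = 1 + c cᵀ / (1 + a)`, with inverse `1 - c cᵀ / (a (1 + a))`, and `U = P⁻¹ Q` is the orthogonal
factor (`lorentz_polar`).
-/

open Matrix

/-- The Gram matrix `diag(1, -1, …, -1)` of the Minkowski form. -/
def minkowskiJ (m : ℕ) : Matrix (Unit ⊕ Fin m) (Unit ⊕ Fin m) ℝ :=
  Matrix.fromBlocks 1 0 0 (-1)

lemma minkowskiJ_sq (m : ℕ) : minkowskiJ m * minkowskiJ m = 1 := by
  simp [minkowskiJ, Matrix.fromBlocks_multiply]

lemma minkowski_apply {m : ℕ} (x : Unit ⊕ Fin m → ℝ) :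
    x ⬝ᵥ minkowskiJ m *ᵥ x = x (Sum.inl ()) ^ 2 - ∑ i, x (Sum.inr i) ^ 2 := by
  simp [minkowskiJ, dotProduct, Matrix.fromBlocks_mulVec, Matrix.neg_mulVec, pow_two,
    sub_eq_add_neg]

lemma mem_lorentzCone {m : ℕ} {x : Unit ⊕ Fin m → ℝ} :
    x ∈ lorentzCone m ↔ 0 ≤ x (Sum.inl ()) ∧ 0 ≤ x ⬝ᵥ minkowskiJ m *ᵥ x := by
  rw [minkowski_apply, sub_nonneg]
  exact Real.sqrt_le_iff

lemma e0_mem (m : ℕ) : Sum.elim (fun _ => 1) (fun _ => 0) ∈ lorentzCone m := by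
  simp [lorentzCone]

/-- Every vector is a difference of two vectors of the cone: `x = (x + t e₀) - t e₀` for large
`t`. -/
lemma exists_cone_sub {m : ℕ} (x : Unit ⊕ Fin m → ℝ) :
    ∃ y ∈ lorentzCone m, ∃ z ∈ lorentzCone m, x = y - z := by
  set r := Real.sqrt (∑ i, x (Sum.inr i) ^ 2) with hr
  have hr0 : 0 ≤ r := Real.sqrt_nonneg _
  refine ⟨x + (r + |x (Sum.inl ())|) • Sum.elim (fun _ => 1) (fun _ => 0), ?_,
    (r + |x (Sum.inl ())|) • Sum.elim (fun _ => 1) (fun _ => 0), ?_, by simp⟩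
  · simp only [lorentzCone, Set.mem_ofPred_eq, Pi.add_apply, Pi.smul_apply, Sum.elim_inr,
      Sum.elim_inl, smul_eq_mul, mul_zero, add_zero, mul_one]
    rw [← hr]
    linarith [neg_abs_le (x (Sum.inl ()))]
  · simp only [lorentzCone, Set.mem_ofPred_eq, Pi.smul_apply, Sum.elim_inr,
      Sum.elim_inl, smul_eq_mul, mul_zero, mul_one]
    simp
    positivity

lemma isUnit_of_image {m : ℕ} {S : Matrix (Unit ⊕ Fin m) (Unit ⊕ Fin m) ℝ}
    (hS : S.mulVec '' lorentzCone m = lorentzCone m) : IsUnit S := by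
  rw [← Matrix.mulVec_surjective_iff_isUnit]
  intro x
  obtain ⟨y, hy, z, hz, rfl⟩ := exists_cone_sub x
  rw [← hS] at hy hz
  obtain ⟨y, -, rfl⟩ := hy
  obtain ⟨z, -, rfl⟩ := hz
  exact ⟨y - z, Matrix.mulVec_sub _ _ _⟩

lemma mem_of_mulVec_mem {m : ℕ} {S : Matrix (Unit ⊕ Fin m) (Unit ⊕ Fin m) ℝ}
    (hS : S.mulVec '' lorentzCone m = lorentzCone m) {x : Unit ⊕ Fin m → ℝ}
    (hx : S *ᵥ x ∈ lorentzCone m) : x ∈ lorentzCone m := by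
  rw [← hS] at hx
  obtain ⟨y, hy, hxy⟩ := hx
  exact Matrix.mulVec_injective_of_isUnit (isUnit_of_image hS) hxy ▸ hy

/-- A vector of the cone at which the Minkowski form is positive is an algebraic interior point. -/
lemma exists_sub_smul_mem {m : ℕ} {z : Unit ⊕ Fin m → ℝ} (hz : z ∈ lorentzCone m)
    (hq : 0 < z ⬝ᵥ minkowskiJ m *ᵥ z) (w : Unit ⊕ Fin m → ℝ) :
    ∃ ε : ℝ, 0 < ε ∧ z - ε • w ∈ lorentzCone m := by
  have h0 : 0 ≤ z (Sum.inl ()) := (mem_lorentzCone.1 hz).1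
  have hlt : Real.sqrt (∑ i, z (Sum.inr i) ^ 2) < z (Sum.inl ()) := by
    rw [minkowski_apply] at hq
    have hs : 0 ≤ ∑ i, z (Sum.inr i) ^ 2 := Finset.sum_nonneg fun i _ => sq_nonneg _
    rw [Real.sqrt_lt hs h0]
    linarith
  have hc : Continuous fun ε : ℝ => (z - ε • w) (Sum.inl ()) -
      Real.sqrt (∑ i, (z - ε • w) (Sum.inr i) ^ 2) := by
    simp only [Pi.sub_apply, Pi.smul_apply, smul_eq_mul]
    fun_prop
  have hev : ∀ᶠ ε in nhds (0 : ℝ), 0 < (z - ε • w) (Sum.inl ()) -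
      Real.sqrt (∑ i, (z - ε • w) (Sum.inr i) ^ 2) := by
    apply hc.continuousAt.eventually_const_lt
    simpa using hlt
  obtain ⟨δ, hδ, h⟩ := Metric.eventually_nhds_iff.1 hev
  refine ⟨δ / 2, by positivity, ?_⟩
  have := @h (δ / 2) (by rw [Real.dist_eq, sub_zero, abs_of_pos] <;> linarith)
  exact (sub_pos.1 this).le

/-- A cone automorphism maps the light cone into itself: if `S x` were interior, then
`S (x - ε e₀)`, and with it `x - ε e₀`, would lie in the cone for some `ε > 0`. -/
lemma minkowski_map_eq_zero {m : ℕ} {S : Matrix (Unit ⊕ Fin m) (Unit ⊕ Fin m) ℝ}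
    (hS : S.mulVec '' lorentzCone m = lorentzCone m) {x : Unit ⊕ Fin m → ℝ}
    (hx : x (Sum.inl ()) = Real.sqrt (∑ i, x (Sum.inr i) ^ 2)) :
    (S *ᵥ x) ⬝ᵥ minkowskiJ m *ᵥ (S *ᵥ x) = 0 := by
  have hxK : x ∈ lorentzCone m := hx.symm.le
  have hSx : S *ᵥ x ∈ lorentzCone m := hS ▸ Set.mem_image_of_mem _ hxK
  by_contra hne
  obtain ⟨ε, hε, h⟩ := exists_sub_smul_mem hSx
    (lt_of_le_of_ne (mem_lorentzCone.1 hSx).2 (Ne.symm hne))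
    (S *ᵥ Sum.elim (fun _ => 1) (fun _ => 0))
  rw [← Matrix.mulVec_smul, ← Matrix.mulVec_sub] at h
  have h' := mem_of_mulVec_mem hS h
  simp only [lorentzCone, Set.mem_ofPred_eq, Pi.sub_apply, Pi.smul_apply, Sum.elim_inr,
      Sum.elim_inl, smul_eq_mul, mul_zero, sub_zero, mul_one] at h'
  linarith

lemma eq_zero_of_symm_of_form {m : ℕ} {E : Matrix (Fin m) (Fin m) ℝ} (hE : Eᵀ = E)
    (h : ∀ v, v ⬝ᵥ E *ᵥ v = 0) : E = 0 := by
  ext i j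
  have hi := h (Pi.single i 1)
  have hj := h (Pi.single j 1)
  have hij := h (Pi.single i 1 + Pi.single j 1)
  have hs : E j i = E i j := congrFun (congrFun hE i) j
  simp only [Matrix.mulVec_add, add_dotProduct, dotProduct_add] at hij
  simp at hi hj hij
  simp only [Matrix.zero_apply]
  linarith

/-- A symmetric form vanishing on the light cone is a multiple of the Minkowski form: evaluate it
at `(‖v‖, v)` and `(‖v‖, -v)`. -/
lemma eq_smul_minkowskiJ {m : ℕ} {B : Matrix (Unit ⊕ Fin m) (Unit ⊕ Fin m) ℝ} (hB : Bᵀ = B)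
    (h : ∀ x : Unit ⊕ Fin m → ℝ, x (Sum.inl ()) = Real.sqrt (∑ i, x (Sum.inr i) ^ 2) →
      x ⬝ᵥ B *ᵥ x = 0) :
    B = B (Sum.inl ()) (Sum.inl ()) • minkowskiJ m := by
  set β := B (Sum.inl ()) (Sum.inl ()) with hβ
  set b : Fin m → ℝ := fun i => B (Sum.inl ()) (Sum.inr i) with hb
  set D := B.toBlocks₂₂ with hD
  have hsym : ∀ i j, B i j = B j i := fun i j => congrFun (congrFun hB j) i
  have key : ∀ (r : ℝ) (v : Fin m → ℝ), r = Real.sqrt (∑ i, v i ^ 2) →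
      β * r ^ 2 + 2 * r * (b ⬝ᵥ v) + v ⬝ᵥ D *ᵥ v = 0 := by
    intro r v hr
    have := h (Sum.elim (fun _ => r) v) (by simpa using hr)
    rw [← this]
    simp only [dotProduct, Matrix.mulVec, Fintype.sum_sum_type, Finset.univ_unique,
      Finset.sum_singleton, Sum.elim_inl, Sum.elim_inr, mul_add, Finset.sum_add_distrib,
      Finset.mul_sum, hD, Matrix.toBlocks₂₂, Matrix.of_apply, hb, hβ]
    have e : ∀ x, v x * (B (Sum.inr x) (Sum.inl default) * r) =
        r * (B (Sum.inl ()) (Sum.inr x) * v x) := by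
      intro x; rw [hsym (Sum.inr x)]; ring
    simp only [e, ← Finset.mul_sum, PUnit.default_eq_unit]
    ring
  have key2 : ∀ v : Fin m → ℝ, Real.sqrt (∑ i, v i ^ 2) * (b ⬝ᵥ v) = 0 ∧
      β * (v ⬝ᵥ v) + v ⬝ᵥ D *ᵥ v = 0 := by
    intro v
    have h1 := key _ v rfl
    have h2 := key (Real.sqrt (∑ i, v i ^ 2)) (-v) (by simp)
    simp only [Matrix.mulVec_neg, dotProduct_neg, neg_dotProduct, neg_neg] at h2
    have h3 : Real.sqrt (∑ i, v i ^ 2) ^ 2 = v ⬝ᵥ v := by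
      rw [Real.sq_sqrt (Finset.sum_nonneg fun i _ => sq_nonneg _)]
      simp [dotProduct, pow_two]
    rw [h3] at h1 h2
    constructor <;> linarith
  have hb0 : ∀ i, b i = 0 := by
    intro i
    simpa [Pi.single_apply] using (key2 (Pi.single i 1)).1
  have hD0 : D + β • 1 = 0 := by
    apply eq_zero_of_symm_of_form
    · ext i j
      simp [hD, Matrix.toBlocks₂₂, hsym (Sum.inr j), Matrix.one_apply, eq_comm]
    · intro v
      have := (key2 v).2
      simp only [Matrix.add_mulVec, dotProduct_add, Matrix.smul_mulVec, Matrix.one_mulVec,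
        dotProduct_smul, smul_eq_mul]
      linarith
  ext (i | i) (j | j)
  · simp [minkowskiJ, hβ]
  · simpa [minkowskiJ] using hb0 j
  · rw [hsym]; simpa [minkowskiJ] using hb0 i
  · have := congrFun (congrFun hD0 i) j
    simp [hD, Matrix.toBlocks₂₂] at this
    simp [minkowskiJ]
    linarith

/-- Polar decomposition of the Lorentz matrix `[[a, dᵀ], [c, Q]]`. -/
lemma lorentz_polar {m : ℕ} {a : ℝ} {c d : Fin m → ℝ} {Q : Matrix (Fin m) (Fin m) ℝ}
    (ha : 0 < a) (hac : a ^ 2 = 1 + c ⬝ᵥ c) (hQ : Q * Qᵀ = 1 + Matrix.vecMulVec c c)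
    (hd : c ᵥ* Q = a • d) :
    ∃ U P : Matrix (Fin m) (Fin m) ℝ, Uᵀ * U = 1 ∧ P.PosSemidef ∧
      P * P = 1 + Matrix.vecMulVec c c ∧ P * U = Q ∧ c ᵥ* U = d := by
  have ha1 : 1 + a ≠ 0 := by positivity
  have ha0 : a ≠ 0 := ha.ne'
  have hcc : c ⬝ᵥ c = a ^ 2 - 1 := by linarith
  set V := Matrix.vecMulVec c c with hV
  have hVV : V * V = (a ^ 2 - 1) • V := by
    rw [hV, Matrix.vecMulVec_mul_vecMulVec, hcc, Matrix.vecMulVec_smul]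
  have hVt : Vᵀ = V := by rw [hV, Matrix.transpose_vecMulVec]
  set P : Matrix (Fin m) (Fin m) ℝ := 1 + (1 + a)⁻¹ • V with hP
  set R : Matrix (Fin m) (Fin m) ℝ := 1 - (a * (1 + a))⁻¹ • V with hR
  have hRt : Rᵀ = R := by simp [hR, hVt]
  have hPP : P * P = 1 + V := by
    simp only [hP, add_mul, mul_add, one_mul, mul_one, smul_mul_assoc, mul_smul_comm, hVV]
    match_scalars <;> field_simp <;> ring
  have hPR : P * R = 1 := by
    simp only [hP, hR, add_mul, mul_sub, one_mul, mul_one, smul_mul_assoc, mul_smul_comm, hVV]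
    match_scalars <;> field_simp <;> ring
  have hRP : R * P = 1 := mul_eq_one_comm.1 hPR
  refine ⟨R * Q, P, ?_, ?_, hPP, ?_, ?_⟩
  · rw [mul_eq_one_comm, Matrix.transpose_mul, hRt]
    calc R * Q * (Qᵀ * R) = R * (Q * Qᵀ) * R := by simp only [mul_assoc]
      _ = R * P * (P * R) := by rw [hQ, ← hPP]; simp only [mul_assoc]
      _ = 1 := by rw [hPR, hRP, one_mul]
  · apply Matrix.PosSemidef.one.add
    apply Matrix.PosSemidef.smul _ (by positivity)
    simpa using Matrix.posSemidef_vecMulVec_self_star c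
  · rw [← mul_assoc, hPR, one_mul]
  · have hcR : c ᵥ* R = a⁻¹ • c := by
      rw [hR, Matrix.vecMul_sub, Matrix.vecMul_smul, Matrix.vecMul_one, hV,
        Matrix.vecMul_vecMulVec, hcc]
      match_scalars
      field_simp
      ring
    rw [← Matrix.vecMul_vecMul, hcR, Matrix.smul_vecMul, hd, smul_smul, inv_mul_cancel₀ ha0,
      one_smul]

/-- If `S(L^n_+) = L^n_+` (n = k + 2 > 1), then `S = ν · [[a, cᵀ], [c, P]] · diag(1, U)`
for some `ν > 0`, `c ∈ ℝ^{n-1}` and orthogonal `U`, where `a = √(1 + ‖c‖²)` and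
`P` is the (unique) positive-semidefinite square root of `I + c cᵀ`. -/
theorem lorentz_cone_automorphism_repr_P (k : ℕ)
    (S : Matrix (Unit ⊕ Fin (k + 1)) (Unit ⊕ Fin (k + 1)) ℝ)
    (hS : S.mulVec '' lorentzCone (k + 1) = lorentzCone (k + 1)) :
    ∃ (ν : ℝ) (c : Fin (k + 1) → ℝ) (U P : Matrix (Fin (k + 1)) (Fin (k + 1)) ℝ),
      0 < ν ∧ Uᵀ * U = 1 ∧ P.PosSemidef ∧ P * P = 1 + Matrix.vecMulVec c c ∧
      S = ν • (Matrix.fromBlocks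
          (Matrix.of fun _ _ => Real.sqrt (1 + ∑ i, (c i) ^ 2))
          (Matrix.of fun _ j => c j) (Matrix.of fun i _ => c i) P * diagOne U) := by
  set J := minkowskiJ (k + 1) with hJ
  have hJJ : J * J = 1 := minkowskiJ_sq _
  have hJt : Jᵀ = J := by simp [hJ, minkowskiJ, Matrix.fromBlocks_transpose]
  have hform : ∀ x, x ⬝ᵥ (Sᵀ * J * S) *ᵥ x = (S *ᵥ x) ⬝ᵥ J *ᵥ (S *ᵥ x) := by
    intro x
    rw [← Matrix.mulVec_mulVec, ← Matrix.mulVec_mulVec, Matrix.mulVec_transpose,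
      dotProduct_comm, ← Matrix.dotProduct_mulVec, dotProduct_comm]
  have hB := eq_smul_minkowskiJ (B := Sᵀ * J * S)
    (by simp [Matrix.transpose_mul, hJt, mul_assoc])
    (fun x hx => by rw [hform]; exact minkowski_map_eq_zero hS hx)
  set μ := (Sᵀ * J * S) (Sum.inl ()) (Sum.inl ()) with hμ
  rw [← hJ] at hB
  have hSe : S *ᵥ Sum.elim (fun _ => 1) (fun _ => 0) ∈ lorentzCone (k + 1) :=
    hS ▸ Set.mem_image_of_mem _ (e0_mem _)
  have hSe' := mem_lorentzCone.1 hSe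
  have hμ0 : 0 ≤ μ := by
    have h := hSe'.2
    rw [← hJ, ← hform, hB, Matrix.smul_mulVec, dotProduct_smul, hJ, minkowski_apply] at h
    simpa using h
  have hSu := isUnit_of_image hS
  have hμne : μ ≠ 0 := by
    intro h0
    rw [h0, zero_smul] at hB
    have hJu : IsUnit J := IsUnit.of_mul_eq_one J hJJ
    have hu : IsUnit (Sᵀ * J * S) := (((Matrix.isUnit_transpose S).2 hSu).mul hJu).mul hSu
    rw [hB] at hu
    exact not_isUnit_zero hu
  have hμpos : 0 < μ := lt_of_le_of_ne hμ0 hμne.symm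
  set ν := Real.sqrt μ with hν
  have hνpos : 0 < ν := Real.sqrt_pos.2 hμpos
  have hνμ : ν * ν = μ := Real.mul_self_sqrt hμ0
  set L := ν⁻¹ • S with hL
  have hSL : S = ν • L := by rw [hL, smul_smul, mul_inv_cancel₀ hνpos.ne', one_smul]
  have hLJL : Lᵀ * J * L = J := by
    simp only [hL, Matrix.transpose_smul, smul_mul_assoc, mul_smul_comm, hB, smul_smul]
    rw [← hνμ]
    match_scalars
    field_simp
  -- A one-sided inverse of a square matrix is two-sided, so `Lᵀ` is a Lorentz matrix too.
  have hLJL' : L * J * Lᵀ = J := by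
    have h1 : (J * Lᵀ * J) * L = 1 := by rw [mul_assoc J, mul_assoc, hLJL, hJJ]
    have h2 := mul_eq_one_comm.1 h1
    calc L * J * Lᵀ = L * (J * Lᵀ * J) * J := by
          simp only [mul_assoc, hJJ, mul_one]
      _ = J := by rw [h2, one_mul]
  set a := L (Sum.inl ()) (Sum.inl ()) with ha
  set c : Fin (k + 1) → ℝ := fun i => L (Sum.inr i) (Sum.inl ()) with hc
  set d : Fin (k + 1) → ℝ := fun i => L (Sum.inl ()) (Sum.inr i) with hd
  set Q := L.toBlocks₂₂ with hQ
  have hJa : ∀ i, J i i = Sum.elim (fun _ => 1) (fun _ => -1) i := by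
    rintro (i | i) <;> simp [hJ, minkowskiJ]
  have entry : ∀ (M N : Matrix (Unit ⊕ Fin (k + 1)) (Unit ⊕ Fin (k + 1)) ℝ) (i j),
      (M * J * N) i j = M i (Sum.inl ()) * N (Sum.inl ()) j -
        ∑ l, M i (Sum.inr l) * N (Sum.inr l) j := by
    intro M N i j
    have hJd : J = Matrix.diagonal (Sum.elim (fun _ => 1) (fun _ => -1)) := by
      ext (i | i) (j | j) <;> simp [hJ, minkowskiJ, Matrix.diagonal_apply, Matrix.one_apply]
      split_ifs <;> simp
    rw [hJd, Matrix.mul_apply]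
    simp [Matrix.mul_diagonal, sub_eq_add_neg]
  have hac : a ^ 2 = 1 + c ⬝ᵥ c := by
    have h := congrFun (congrFun hLJL (Sum.inl ())) (Sum.inl ())
    rw [entry, hJa] at h
    simp only [Matrix.transpose_apply, Sum.elim_inl] at h
    simp only [dotProduct, hc, ha]
    linarith
  have hQQ : Q * Qᵀ = 1 + Matrix.vecMulVec c c := by
    ext i j
    have h := congrFun (congrFun hLJL' (Sum.inr i)) (Sum.inr j)
    rw [entry] at h
    simp only [Matrix.transpose_apply, hJ, minkowskiJ, Matrix.fromBlocks_apply₂₂,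
      Matrix.neg_apply] at h
    simp only [Matrix.mul_apply, Matrix.transpose_apply, hQ, Matrix.toBlocks₂₂, Matrix.of_apply,
      Matrix.add_apply, Matrix.vecMulVec_apply, hc]
    linarith
  have hcQ : c ᵥ* Q = a • d := by
    ext j
    have h := congrFun (congrFun hLJL (Sum.inl ())) (Sum.inr j)
    rw [entry] at h
    simp only [Matrix.transpose_apply, hJ, minkowskiJ, Matrix.fromBlocks_apply₁₂,
      Matrix.zero_apply] at h
    simp only [Matrix.vecMul, dotProduct, hQ, Matrix.toBlocks₂₂, Matrix.of_apply, hc, hd, ha,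
      Pi.smul_apply, smul_eq_mul]
    linarith
  have hapos : 0 < a := by
    have h1 : 0 ≤ a := by
      have h := hSe'.1
      have h2 : 0 ≤ S (Sum.inl ()) (Sum.inl ()) := by
        simpa [Matrix.mulVec, dotProduct] using h
      rw [ha, hL, Matrix.smul_apply, smul_eq_mul]
      positivity
    have h2 : 0 ≤ c ⬝ᵥ c := Finset.sum_nonneg fun i _ => mul_self_nonneg _
    rcases h1.eq_or_lt with h | h
    · rw [← h] at hac; linarith
    · exact h
  obtain ⟨U, P, hU, hPpos, hPP, hPU, hcU⟩ := lorentz_polar hapos hac hQQ hcQ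
  refine ⟨ν, c, U, P, hνpos, hU, hPpos, hPP, ?_⟩
  have hsq : Real.sqrt (1 + ∑ i, (c i) ^ 2) = a := by
    have : 1 + ∑ i, (c i) ^ 2 = a ^ 2 := by rw [hac]; simp [dotProduct, pow_two]
    rw [this, Real.sqrt_sq hapos.le]
  rw [hsq, diagOne, Matrix.fromBlocks_multiply]
  rw [hSL]
  congr 1
  ext (i | i) (j | j)
  · simp [ha]
  · have h := congrFun hcU j
    simpa [Matrix.mul_apply, Matrix.vecMul, dotProduct, hd] using h.symm
  · simp [hc]
  · have h := congrFun (congrFun hPU i) j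
    simpa [hQ, Matrix.toBlocks₂₂] using h.symm
end

section
/- Let n > 1 and let Λ : ℝⁿ → ℝⁿ be an invertible linear map satisfying Λ(x ∘ y) = Λ(x) ∘ Λ(y) for all x, y ∈ ℝⁿ, where ∘ is the spin (Jordan) product. Then Λ = diag(1, D) for some orthogonal (n-1)×(n-1) matrix D; that is, Λ(x₀, x̄) = (x₀, D x̄) for all x = (x₀, x̄) ∈ ℝ × ℝ^{n-1}. -/
/-!
The unit `e = (1, 0)` is fixed by `Λ` because `Λ` is onto. A vector `v` with `v₀ = 0` satisfies
`v ∘ v = |v|² e`, hence so does `w = Λ v` with the same scalar, and the vector part of this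
identity is `2 w₀ w̄ = 0`. If `w₀ ≠ 0` then `w = w₀ e = Λ (w₀ e)`, and injectivity makes `v` a
multiple of `e`, forcing `w₀ = 0` (`spin_scalar_part_eq_zero`). So `Λ` preserves the hyperplane
`v₀ = 0`; as `u ∘ v = ⟨u, v⟩ e` there, the restriction of `Λ` to it is an isometry, and its matrix
is the orthogonal matrix `D`.
-/

open Matrix

/-- The spin (Jordan) product on ℝⁿ, n = m + 1, coordinates indexed by `Unit ⊕ Fin m`:
`x ∘ y = (⟨x, y⟩, x₀ ȳ + y₀ x̄)`. -/
def spinMul {m : ℕ} (x y : (Unit ⊕ Fin m) → ℝ) : (Unit ⊕ Fin m) → ℝ :=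
  Sum.elim (fun _ => ∑ i, x i * y i)
    (fun i => x (Sum.inl ()) * y (Sum.inr i) + y (Sum.inl ()) * x (Sum.inr i))

/-- The unit `(1, 0)` of the spin product. -/
def spinOne (m : ℕ) : (Unit ⊕ Fin m) → ℝ := Sum.elim (fun _ => 1) (fun _ => 0)

/-- The inclusion `v ↦ (0, v)` of the vector part. -/
def spinVec (m : ℕ) : (Fin m → ℝ) →ₗ[ℝ] ((Unit ⊕ Fin m) → ℝ) where
  toFun v := Sum.elim (fun _ => 0) v
  map_add' u v := by ext (i | i) <;> simp
  map_smul' c v := by ext (i | i) <;> simp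

lemma spinOne_mul {m : ℕ} (y : (Unit ⊕ Fin m) → ℝ) : spinMul (spinOne m) y = y := by
  ext (i | i) <;> simp [spinMul, spinOne]

lemma spinMul_one {m : ℕ} (y : (Unit ⊕ Fin m) → ℝ) : spinMul y (spinOne m) = y := by
  ext (i | i) <;> simp [spinMul, spinOne]

lemma spinVec_mul {m : ℕ} (u v : Fin m → ℝ) :
    spinMul (spinVec m u) (spinVec m v) = (u ⬝ᵥ v) • spinOne m := by
  ext (i | i) <;> simp [spinMul, spinOne, spinVec, dotProduct]

lemma spin_decomp {m : ℕ} (x : (Unit ⊕ Fin m) → ℝ) :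
    x = x (Sum.inl ()) • spinOne m + spinVec m (fun i => x (Sum.inr i)) := by
  ext (i | i) <;> simp [spinOne, spinVec]

lemma spin_map_one {m : ℕ} (Λ : ((Unit ⊕ Fin m) → ℝ) →ₗ[ℝ] ((Unit ⊕ Fin m) → ℝ))
    (hsurj : Function.Surjective Λ)
    (hmul : ∀ x y, Λ (spinMul x y) = spinMul (Λ x) (Λ y)) :
    Λ (spinOne m) = spinOne m := by
  obtain ⟨y, hy⟩ := hsurj (spinOne m)
  have h := hmul (spinOne m) y
  rw [spinOne_mul, hy, spinMul_one] at h
  exact h.symm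

/-- `Λ` preserves the hyperplane of vectors with zero scalar part. -/
lemma spin_scalar_part_eq_zero {m : ℕ}
    (Λ : ((Unit ⊕ Fin m) → ℝ) →ₗ[ℝ] ((Unit ⊕ Fin m) → ℝ))
    (hbij : Function.Bijective Λ)
    (hmul : ∀ x y, Λ (spinMul x y) = spinMul (Λ x) (Λ y)) (v : Fin m → ℝ) :
    Λ (spinVec m v) (Sum.inl ()) = 0 := by
  have h1 := spin_map_one Λ hbij.2 hmul
  by_contra h0
  have h := hmul (spinVec m v) (spinVec m v)
  rw [spinVec_mul, map_smul, h1] at h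
  have hw : ∀ i, Λ (spinVec m v) (Sum.inr i) = 0 := by
    intro i
    have hi := congrFun h (Sum.inr i)
    simp only [spinMul, spinOne, Pi.smul_apply, Sum.elim_inr, smul_eq_mul, mul_zero] at hi
    have : Λ (spinVec m v) (Sum.inl ()) * Λ (spinVec m v) (Sum.inr i) = 0 := by linarith
    exact (mul_eq_zero.mp this).resolve_left h0
  have hv : spinVec m v = Λ (spinVec m v) (Sum.inl ()) • spinOne m := by
    apply hbij.1
    rw [map_smul, h1]
    ext (i | i)
    · simp [spinOne]
    · simp [spinOne, hw]
  have := congrFun hv (Sum.inl ())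
  simp only [spinVec, spinOne, LinearMap.coe_mk, AddHom.coe_mk, Pi.smul_apply, Sum.elim_inl,
    smul_eq_mul, mul_one] at this
  exact h0 this.symm

/-- Every invertible linear map on ℝⁿ (n = k + 2 > 1) preserving the spin (Jordan)
product has the form `diag(1, D)` with `D` orthogonal:
`Λ(x₀, x̄) = (x₀, D x̄)`. -/
theorem spin_algebra_automorphism_representation (k : ℕ)
    (Λ : ((Unit ⊕ Fin (k + 1)) → ℝ) →ₗ[ℝ] ((Unit ⊕ Fin (k + 1)) → ℝ))
    (hbij : Function.Bijective Λ)
    (hmul : ∀ x y, Λ (spinMul x y) = spinMul (Λ x) (Λ y)) :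
    ∃ D : Matrix (Fin (k + 1)) (Fin (k + 1)) ℝ, Dᵀ * D = 1 ∧
      ∀ x, Λ x = Sum.elim (fun _ => x (Sum.inl ()))
        (D.mulVec fun i => x (Sum.inr i)) := by
  have h1 := spin_map_one Λ hbij.2 hmul
  have h0 := spin_scalar_part_eq_zero Λ hbij hmul
  refine ⟨LinearMap.toMatrix' (LinearMap.funLeft ℝ ℝ Sum.inr ∘ₗ Λ ∘ₗ spinVec (k + 1)), ?_, ?_⟩
  · ext i j
    -- Compare the scalar parts of `Λ (eᵢ ∘ eⱼ) = Λ eᵢ ∘ Λ eⱼ`.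
    have h := hmul (spinVec _ (Pi.single i 1)) (spinVec _ (Pi.single j 1))
    rw [spinVec_mul, map_smul, h1] at h
    have hs := congrFun h (Sum.inl ())
    simp only [spinMul, spinOne, Pi.smul_apply, Sum.elim_inl, smul_eq_mul, mul_one,
      Fintype.sum_sum_type, Finset.univ_unique, Finset.sum_singleton, PUnit.default_eq_unit, h0,
      zero_add, mul_zero, single_dotProduct, one_mul] at hs
    simp only [Matrix.mul_apply, Matrix.transpose_apply, LinearMap.toMatrix'_apply,
      LinearMap.comp_apply, LinearMap.funLeft_apply]
    rw [Matrix.one_apply]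
    simpa [Pi.single_apply] using hs.symm
  · intro x
    rw [← Matrix.toLin'_apply, Matrix.toLin'_toMatrix']
    conv_lhs => rw [spin_decomp x, map_add, map_smul, h1]
    ext (i | i)
    · simp [spinOne, h0]
    · simp [spinOne, LinearMap.funLeft_apply]
end

section
/- Let n ≥ 1 and let S be an n×n real matrix. Then S(ℝⁿ₊) = ℝⁿ₊ (where ℝⁿ₊ is the nonnegative orthant) if and only if S = Q·Δ for some n×n permutation matrix Q and some n×n diagonal matrix Δ with strictly positive diagonal entries. -/
/-!
If `S` maps the orthant onto itself, its columns `S eⱼ` are nonnegative, and nonnegative preimages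
of the basis vectors form the columns of a nonnegative `T` with `S * T = 1`, hence `T * S = 1`.
So it suffices that a nonnegative matrix with nonnegative inverse is monomial
(`exists_perm_of_nonneg_inverse`): as all terms of the sums defining `S * T` and `T * S` are
nonnegative, each term of a vanishing off-diagonal entry is zero. The diagonal entries of `S * T`
provide `σ i` with `S i (σ i)` and `T (σ i) i` both positive; the off-diagonal entries of
`S * T` make `σ` injective, and those of `T * S` kill all other entries of row `i` of `S`.

Conversely, `(Q * Δ) x` has `i`-th coordinate `d (σ i) * x (σ i)`, which can be solved for `x`
within the orthant.
-/

open Matrix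

lemma mul_entry_eq_zero_of_mul_eq_one {n : ℕ} {A B : Matrix (Fin n) (Fin n) ℝ}
    (hA : ∀ i j, 0 ≤ A i j) (hB : ∀ i j, 0 ≤ B i j) (h : A * B = 1)
    {i k : Fin n} (hik : i ≠ k) (j : Fin n) : A i j * B j k = 0 := by
  have hsum : ∑ j, A i j * B j k = 0 := by
    rw [← Matrix.mul_apply, h, Matrix.one_apply_ne hik]
  exact (Finset.sum_eq_zero_iff_of_nonneg
    (fun j _ => mul_nonneg (hA i j) (hB j k))).1 hsum j (Finset.mem_univ j)

/-- A nonnegative matrix with a nonnegative inverse has exactly one nonzero entry in each row and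
column. -/
lemma exists_perm_of_nonneg_inverse {n : ℕ} {S T : Matrix (Fin n) (Fin n) ℝ}
    (hS : ∀ i j, 0 ≤ S i j) (hT : ∀ i j, 0 ≤ T i j) (hST : S * T = 1) :
    ∃ σ : Equiv.Perm (Fin n), (∀ i, 0 < S i (σ i)) ∧ ∀ i j, σ i ≠ j → S i j = 0 := by
  have hTS : T * S = 1 := mul_eq_one_comm.1 hST
  have hpivot : ∀ i, ∃ j, S i j * T j i ≠ 0 := by
    intro i
    by_contra! hzero
    have hone : ∑ j, S i j * T j i = 1 := by
      rw [← Matrix.mul_apply, hST, Matrix.one_apply_eq]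
    simp [hzero] at hone
  choose f hf using hpivot
  have hf_inj : Function.Injective f := by
    intro i k hik
    by_contra hne
    rcases mul_eq_zero.1 (mul_entry_eq_zero_of_mul_eq_one hS hT hST hne (f i)) with h | h
    · exact left_ne_zero_of_mul (hf i) h
    · rw [hik] at h
      exact right_ne_zero_of_mul (hf k) h
  refine ⟨Equiv.ofBijective f (Finite.injective_iff_bijective.1 hf_inj), fun i => ?_,
    fun i j hij => ?_⟩
  · exact lt_of_le_of_ne (hS i (f i)) (left_ne_zero_of_mul (hf i)).symm
  · have hne : f i ≠ j := hij
    exact (mul_eq_zero.1 (mul_entry_eq_zero_of_mul_eq_one hT hS hTS hne i)).resolve_left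
      (right_ne_zero_of_mul (hf i))

/-- `S(ℝⁿ₊) = ℝⁿ₊` iff `S = Q·Δ` with `Q` a permutation matrix and `Δ` a diagonal
matrix with strictly positive diagonal entries. -/
theorem orthant_automorphism_iff (n : ℕ) (hn : 1 ≤ n) (S : Matrix (Fin n) (Fin n) ℝ) :
    S.mulVec '' {x | ∀ i, 0 ≤ x i} = {x | ∀ i, 0 ≤ x i} ↔
      ∃ (σ : Equiv.Perm (Fin n)) (d : Fin n → ℝ),
        (∀ i, 0 < d i) ∧
        S = (Matrix.of fun i j => if σ i = j then (1 : ℝ) else 0) * Matrix.diagonal d := by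
  constructor
  · intro h
    have hbasis : ∀ j : Fin n, (Pi.single j 1 : Fin n → ℝ) ∈ {x : Fin n → ℝ | ∀ i, 0 ≤ x i} :=
      fun j i => (Pi.single_nonneg.2 zero_le_one : (0 : Fin n → ℝ) ≤ Pi.single j 1) i
    have hS : ∀ i j, 0 ≤ S i j := by
      intro i j
      have hcol : S.mulVec (Pi.single j 1) ∈ {x : Fin n → ℝ | ∀ i, 0 ≤ x i} :=
        h ▸ Set.mem_image_of_mem _ (hbasis j)
      simpa using hcol i
    have hpre : ∀ j : Fin n, ∃ x : Fin n → ℝ, (∀ i, 0 ≤ x i) ∧ S.mulVec x = Pi.single j 1 := by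
      intro j
      have hj := hbasis j
      rw [← h] at hj
      exact hj
    choose x hx hSx using hpre
    have hST : S * (Matrix.of fun i j => x j i) = 1 := by
      ext i j
      have hij := congrFun (hSx j) i
      rw [Matrix.one_apply, Matrix.mul_apply]
      simpa [Matrix.mulVec, dotProduct, Pi.single_apply] using hij
    obtain ⟨σ, hpos, hzero⟩ := exists_perm_of_nonneg_inverse hS (fun i j => hx j i) hST
    refine ⟨σ, fun j => S (σ.symm j) j, fun j => ?_, ?_⟩
    · simpa using hpos (σ.symm j)
    · ext i j
      rw [Matrix.mul_diagonal, Matrix.of_apply]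
      split_ifs with hij
      · simp [← hij]
      · simp [hzero i j hij]
  · rintro ⟨σ, d, hd, rfl⟩
    have hval : ∀ (x : Fin n → ℝ) (i : Fin n),
        (((Matrix.of fun i j => if σ i = j then (1 : ℝ) else 0) * Matrix.diagonal d).mulVec x) i
          = d (σ i) * x (σ i) := by
      intro x i
      simp [Matrix.mulVec, dotProduct, Matrix.mul_diagonal]
    ext y
    constructor
    · rintro ⟨x, hx, rfl⟩ i
      rw [hval]
      exact mul_nonneg (hd _).le (hx _)
    · intro hy
      refine ⟨fun j => y (σ.symm j) / d j, fun j => div_nonneg (hy _) (hd j).le, ?_⟩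
      ext i
      rw [hval, Equiv.symm_apply_apply]
      exact mul_div_cancel₀ _ (hd (σ i)).ne'
end

section
/- Let n ≥ 1 and let S : ℝⁿ → ℝⁿ be an invertible linear map satisfying S(x * y) = S(x) * S(y) for all x, y ∈ ℝⁿ, where * is the componentwise (Hadamard) product. Then S is a permutation matrix; that is, there is a permutation σ of {1, ..., n} with (Sx)ᵢ = x_{σ(i)} for all x and i. -/
/-!
Write `e j` for the standard basis vectors. Since `S` is onto, for each `i` some `S (e j) i` is
nonzero. Applying `S` to `x * e j = x j • e j` and cancelling `S (e j) i` gives `S x i = x j` for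
every `x`, so each coordinate functional of `S` is evaluation at an index `j = σ i`. If `σ i = σ i'`
then the coordinates `i` and `i'` agree on the range of `S`, which is everything, so `i = i'`; an
injective self-map of a finite set is a permutation.
-/

open Matrix

/-- Every invertible linear map on ℝⁿ preserving the componentwise (Hadamard) product
is a permutation matrix: `(Sx)ᵢ = x_{σ(i)}` for some permutation `σ`. -/
theorem hadamard_algebra_automorphism_is_permutation (n : ℕ) (hn : 1 ≤ n)
    (S : (Fin n → ℝ) →ₗ[ℝ] (Fin n → ℝ))
    (hbij : Function.Bijective S)
    (hmul : ∀ x y : Fin n → ℝ, S (x * y) = S x * S y) :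
    ∃ σ : Equiv.Perm (Fin n), ∀ (x : Fin n → ℝ) (i : Fin n), S x i = x (σ i) := by
  have key : ∀ i, ∃ j, ∀ x, S x i = x j := by
    intro i
    have hne : ∃ j, S (Pi.single j 1) i ≠ 0 := by
      by_contra! h
      obtain ⟨x, hx⟩ := hbij.2 1
      have hx0 : S x i = 0 := by
        rw [pi_eq_sum_univ' x, map_sum, Finset.sum_apply]
        refine Finset.sum_eq_zero fun j _ => ?_
        rw [map_smul, Pi.smul_apply, h j, smul_zero]
      simp [hx] at hx0
    obtain ⟨j, hj⟩ := hne
    refine ⟨j, fun x => mul_right_cancel₀ hj ?_⟩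
    have hx : x * Pi.single j 1 = x j • (Pi.single j 1 : Fin n → ℝ) := by
      ext k
      by_cases hk : k = j
      · subst hk; simp
      · simp [hk]
    have h := congrFun (hmul x (Pi.single j 1)) i
    rw [hx, map_smul] at h
    exact h.symm
  choose f hf using key
  have hinj : Function.Injective f := by
    intro i i' hii
    by_contra hne
    obtain ⟨x, hx⟩ := hbij.2 (Pi.single i 1)
    have h : S x i = S x i' := by rw [hf, hf, hii]
    simp [hx, Ne.symm hne] at h
  exact ⟨Equiv.ofBijective f (Finite.injective_iff_bijective.mp hinj), fun x i => hf i x⟩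
end
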